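/- arXiv:1407.5443 — 8 statements merged into one kernel-verified Lean document; each statement's English description precedes it below -/
import Mathlib

section
/- Let R be a commutative ring, I ⊆ R an ideal with I² = 0, r ≥ 1 an integer, and E = Rʳ the free R-module of rank r. Every R-linear endomorphism of E maps I·E into itself and hence induces an endomorphism of E/I·E, giving a group homomorphism Aut_R(E) → Aut_R(E/I·E). Then the sequence 0 → Hom_R(E, I·E) → Aut_R(E) → Aut_R(E/I·E) → 1 is exact; explicitly: (i) for every h ∈ Hom_R(E, I·E), the map id_E + h is an R-linear automorphism of E, and h ↦ id_E + h is an injective group homomorphism from the additive group Hom_R(E, I·E) into Aut_R(E); (ii) an R-linear automorphism of E induces the identity on E/I·E if and only if it equals id_E + h for some h ∈ Hom_R(E, I·E); (iii) every R-linear automorphism of E/I·E is induced by some R-linear automorphism of E. -/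
/-!
Since `I ^ 2 = 0`, a map `h : E → I • E` kills `I • E`, so any two such maps compose to zero
(`comp_eq_zero_of_sq`). Hence `(id + h₁) ∘ (id + h₂) = id + (h₁ + h₂)`, and `id + h` is invertible
with inverse `id - h`.

An automorphism `b` of `E / I • E` and its inverse lift to endomorphisms `β`, `γ` of `E`, because `E`
is projective. Both `β ∘ γ` and `γ ∘ β` induce the identity modulo `I • E`, so they are of the form
`id + h` and therefore bijective; thus `β` is bijective.
-/

section SquareZero

variable {R E : Type*} [CommRing R] [AddCommGroup E] [Module R E] {I : Ideal R}

theorem comp_eq_zero_of_sq (hI : I ^ 2 = ⊥) {h₁ h₂ : E →ₗ[R] E}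
    (H₁ : ∀ v, h₁ v ∈ (I • ⊤ : Submodule R E)) (H₂ : ∀ v, h₂ v ∈ (I • ⊤ : Submodule R E)) :
    h₁ ∘ₗ h₂ = 0 := by
  ext v
  have hmap : (I • ⊤ : Submodule R E).map h₁ ≤ I • (I • ⊤ : Submodule R E) := by
    rw [Submodule.map_smul'']
    refine Submodule.smul_mono le_rfl ?_
    rintro _ ⟨w, -, rfl⟩
    exact H₁ w
  have hmem := hmap (Submodule.mem_map_of_mem (H₂ v))
  rw [← Submodule.mul_smul, ← pow_two, hI, Submodule.bot_smul, Submodule.mem_bot] at hmem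
  simpa using hmem

theorem id_add_comp_id_add (hI : I ^ 2 = ⊥) {h₁ h₂ : E →ₗ[R] E}
    (H₁ : ∀ v, h₁ v ∈ (I • ⊤ : Submodule R E)) (H₂ : ∀ v, h₂ v ∈ (I • ⊤ : Submodule R E)) :
    (LinearMap.id + h₁) ∘ₗ (LinearMap.id + h₂) = LinearMap.id + (h₁ + h₂) := by
  rw [LinearMap.comp_add, LinearMap.add_comp, LinearMap.add_comp, comp_eq_zero_of_sq hI H₁ H₂,
    LinearMap.id_comp, LinearMap.comp_id, LinearMap.id_comp, add_zero]
  abel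

theorem exists_equiv_id_add (hI : I ^ 2 = ⊥) {h : E →ₗ[R] E}
    (H : ∀ v, h v ∈ (I • ⊤ : Submodule R E)) :
    ∃ a : E ≃ₗ[R] E, (a : E →ₗ[R] E) = LinearMap.id + h := by
  have H' : ∀ v, (-h) v ∈ (I • ⊤ : Submodule R E) := fun v => neg_mem (H v)
  refine ⟨LinearEquiv.ofLinearMap (LinearMap.id + h) (LinearMap.id + -h) ?_ ?_, rfl⟩
  · rw [id_add_comp_id_add hI H H', add_neg_cancel, add_zero]
  · rw [id_add_comp_id_add hI H' H, neg_add_cancel, add_zero]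

theorem mkQ_comp_eq_iff (f : E →ₗ[R] E) :
    (I • ⊤ : Submodule R E).mkQ ∘ₗ f = (I • ⊤ : Submodule R E).mkQ ↔
      ∃ h : E →ₗ[R] E, (∀ v, h v ∈ (I • ⊤ : Submodule R E)) ∧ f = LinearMap.id + h := by
  constructor
  · intro hf
    refine ⟨f - LinearMap.id, fun v => ?_, by abel⟩
    exact (Submodule.Quotient.eq _).1 (LinearMap.congr_fun hf v)
  · rintro ⟨h, H, rfl⟩
    ext v
    refine (Submodule.Quotient.eq _).2 ?_
    simpa using H v

theorem bijective_of_mkQ_comp_eq (hI : I ^ 2 = ⊥) {f : E →ₗ[R] E}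
    (hf : (I • ⊤ : Submodule R E).mkQ ∘ₗ f = (I • ⊤ : Submodule R E).mkQ) :
    Function.Bijective f := by
  obtain ⟨h, H, rfl⟩ := (mkQ_comp_eq_iff f).1 hf
  obtain ⟨a, ha⟩ := exists_equiv_id_add hI H
  rw [← ha]
  exact a.bijective

theorem exists_equiv_lift [Module.Projective R E] (hI : I ^ 2 = ⊥)
    (b : (E ⧸ (I • ⊤ : Submodule R E)) ≃ₗ[R] (E ⧸ (I • ⊤ : Submodule R E))) :
    ∃ a : E ≃ₗ[R] E, (I • ⊤ : Submodule R E).mkQ ∘ₗ (a : E →ₗ[R] E) =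
      (b : (E ⧸ (I • ⊤ : Submodule R E)) →ₗ[R] (E ⧸ (I • ⊤ : Submodule R E))) ∘ₗ
        (I • ⊤ : Submodule R E).mkQ := by
  set π := (I • ⊤ : Submodule R E).mkQ with hπ
  have hsurj : Function.Surjective π := Submodule.mkQ_surjective _
  obtain ⟨β, hβ⟩ := Module.projective_lifting_property π (b.toLinearMap ∘ₗ π) hsurj
  obtain ⟨γ, hγ⟩ := Module.projective_lifting_property π (b.symm.toLinearMap ∘ₗ π) hsurj
  have hβ' : ∀ v, π (β v) = b (π v) := LinearMap.congr_fun hβ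
  have hγ' : ∀ v, π (γ v) = b.symm (π v) := LinearMap.congr_fun hγ
  have h₁ : Function.Bijective (β ∘ₗ γ) :=
    bijective_of_mkQ_comp_eq hI (LinearMap.ext fun v => by
      change π (β (γ v)) = π v
      rw [hβ', hγ', b.apply_symm_apply])
  have h₂ : Function.Bijective (γ ∘ₗ β) :=
    bijective_of_mkQ_comp_eq hI (LinearMap.ext fun v => by
      change π (γ (β v)) = π v
      rw [hγ', hβ', b.symm_apply_apply])
  rw [LinearMap.coe_comp] at h₁ h₂
  exact ⟨LinearEquiv.ofBijective β ⟨h₂.injective.of_comp, h₁.surjective.of_comp⟩, hβ⟩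

end SquareZero

theorem stmt_0 (R : Type*) [CommRing R] (I : Ideal R) (hI : I ^ 2 = ⊥)
    (r : ℕ) (hr : 1 ≤ r) :
    -- every endomorphism of E maps I·E into itself
    (∀ φ : (Fin r → R) →ₗ[R] (Fin r → R), ∀ v ∈ (I • ⊤ : Submodule R (Fin r → R)),
      φ v ∈ (I • ⊤ : Submodule R (Fin r → R))) ∧
    -- (i) `id + h` is an automorphism ...
    (∀ h : (Fin r → R) →ₗ[R] (Fin r → R),
      (∀ v, h v ∈ (I • ⊤ : Submodule R (Fin r → R))) →
      ∃ a : (Fin r → R) ≃ₗ[R] (Fin r → R),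
        (a : (Fin r → R) →ₗ[R] (Fin r → R)) = LinearMap.id + h) ∧
    -- ... and `h ↦ id + h` is a group homomorphism from the additive group
    -- `Hom_R(E, I·E)` to `Aut_R(E)` ...
    (∀ h₁ h₂ : (Fin r → R) →ₗ[R] (Fin r → R),
      (∀ v, h₁ v ∈ (I • ⊤ : Submodule R (Fin r → R))) →
      (∀ v, h₂ v ∈ (I • ⊤ : Submodule R (Fin r → R))) →
      (LinearMap.id + h₁) ∘ₗ (LinearMap.id + h₂) = LinearMap.id + (h₁ + h₂)) ∧
    -- ... which is injective
    (∀ h₁ h₂ : (Fin r → R) →ₗ[R] (Fin r → R),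
      (LinearMap.id + h₁ : (Fin r → R) →ₗ[R] (Fin r → R)) = LinearMap.id + h₂ → h₁ = h₂) ∧
    -- (ii) an automorphism induces the identity on `E/I·E` iff it is `id + h`
    (∀ a : (Fin r → R) ≃ₗ[R] (Fin r → R),
      ((I • ⊤ : Submodule R (Fin r → R)).mkQ ∘ₗ (a : (Fin r → R) →ₗ[R] (Fin r → R))
          = (I • ⊤ : Submodule R (Fin r → R)).mkQ
        ↔ ∃ h : (Fin r → R) →ₗ[R] (Fin r → R),
            (∀ v, h v ∈ (I • ⊤ : Submodule R (Fin r → R))) ∧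
            (a : (Fin r → R) →ₗ[R] (Fin r → R)) = LinearMap.id + h)) ∧
    -- (iii) every automorphism of `E/I·E` is induced by an automorphism of `E`
    (∀ b : ((Fin r → R) ⧸ (I • ⊤ : Submodule R (Fin r → R))) ≃ₗ[R]
           ((Fin r → R) ⧸ (I • ⊤ : Submodule R (Fin r → R))),
      ∃ a : (Fin r → R) ≃ₗ[R] (Fin r → R),
        (I • ⊤ : Submodule R (Fin r → R)).mkQ ∘ₗ (a : (Fin r → R) →ₗ[R] (Fin r → R))
          = (b : ((Fin r → R) ⧸ (I • ⊤ : Submodule R (Fin r → R))) →ₗ[R]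
               ((Fin r → R) ⧸ (I • ⊤ : Submodule R (Fin r → R)))) ∘ₗ
            (I • ⊤ : Submodule R (Fin r → R)).mkQ) := by
  exact ⟨fun φ _ hv => Submodule.smul_top_le_comap_smul_top I φ hv,
    fun _ H => exists_equiv_id_add hI H,
    fun _ _ H₁ H₂ => id_add_comp_id_add hI H₁ H₂,
    fun _ _ h => add_left_cancel h,
    fun a => mkQ_comp_eq_iff (a : (Fin r → R) →ₗ[R] (Fin r → R)),
    fun b => exists_equiv_lift hI b⟩
end

section
/- Let R be a commutative ring and I ⊆ R an ideal with I² = 0. Let N = Ann_R(I) be the annihilator of I (the kernel of the canonical map R → End(I)); note I ⊆ N, and set A = R/N. Let E be a finitely generated projective R-module and E_A = E/N·E its reduction, which is a finitely generated projective A-module. Both I and Hom_R(E, I·E) are naturally A-modules, since N annihilates I and I·E. Then the canonical A-linear map End_A(E_A) ⊗_A I → Hom_R(E, I·E), sending φ ⊗ x to the R-linear map v ↦ x·w, where w ∈ E is any lift of φ(v mod N·E) (this is independent of the lift because x·N·E = 0), is a well-defined isomorphism of A-modules. -/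
/-!
A finitely generated projective module `E` has a finite dual basis: `e i ∈ E` and linear forms
`f i` with `v = ∑ i, f i v • e i`. Since `f j` maps `I·E` into `I`, every `g : E → I·E` satisfies
`g v = ∑ i j, f i v • f j (g (e i)) • e j`, so
`g ↦ ∑ i j, (v ↦ f i v • e j) ⊗ f j (g (e i))` is a right inverse of the canonical map
(`canonicalMap_invMap`). It is also a left inverse (`invMap_canonicalMap`): if `w i` lifts
`φ (e i)`, the image of `φ ⊗ x` has coefficients `f j (w i) * x`, and moving `f j (w i)` to the
left factor recovers the expansion of `φ` in rank one endomorphisms. No localization is needed.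
-/

open TensorProduct

/-!
STATEMENT 1: Let `R` be a commutative ring, `I` an ideal with `I² = 0`,
`N = Ann_R(I)` (so `I ⊆ N`), `A = R/N`, and `E` a finitely generated projective
`R`-module with reduction `E_A = E/N·E`.  Then the canonical map
`End_A(E_A) ⊗_A I → Hom_R(E, I·E)`, `φ ⊗ x ↦ (v ↦ x·w)` where `w` lifts
`φ(v mod N·E)`, is a well-defined isomorphism of `A`-modules.
-/

section

variable (R : Type*) [CommRing R] (I : Ideal R)
variable (E : Type*) [AddCommGroup E] [Module R E]

/-- The annihilator `N = Ann_R(I)` kills `I·E`. -/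
lemma annihilator_smul_mem_smul_top_eq_zero
    (r : R) (hr : r ∈ I.annihilator) (x : E)
    (hx : x ∈ I • (⊤ : Submodule R E)) : r • x = 0 := by
  refine Submodule.smul_induction_on hx ?_ ?_
  · intro i hi e _
    have h0 : r * i = 0 := by
      simpa [smul_eq_mul] using Submodule.mem_annihilator.mp hr i hi
    rw [smul_smul, h0, zero_smul]
  · intro a b iha ihb
    rw [smul_add, iha, ihb, add_zero]

/-- `I` is a module over `A = R/Ann(I)`, since `N` annihilates `I`. -/
noncomputable def moduleA_I : Module (R ⧸ I.annihilator) ↥I :=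
  Module.IsTorsionBySet.module (fun x r => Subtype.ext (by
    simpa using Submodule.mem_annihilator.mp r.2 x.1 x.2))

/-- `Hom_R(E, I·E)` is a module over `A = R/Ann(I)`, since `N` annihilates
`I·E`. -/
noncomputable def moduleA_Hom :
    Module (R ⧸ I.annihilator) (E →ₗ[R] ↥(I • (⊤ : Submodule R E))) :=
  Module.IsTorsionBySet.module (fun φ r => LinearMap.ext fun v => Subtype.ext (by
    have : ((r : R) • φ) v = (r : R) • (φ v) := rfl
    rw [this]
    simpa using annihilator_smul_mem_smul_top_eq_zero R I E r r.2 (φ v).1 (φ v).2))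

end

/-- Multiplication by `x ∈ I`, as a map `E ⧸ N·E → I·E`; it is well defined because `x·N = 0`. -/
noncomputable def mulQuot (R : Type*) [CommRing R] (I : Ideal R)
    (E : Type*) [AddCommGroup E] [Module R E] (x : I) :
    (E ⧸ (I.annihilator • (⊤ : Submodule R E))) →ₗ[R] ↥(I • (⊤ : Submodule R E)) :=
  Submodule.liftQ _
    (((x : R) • (LinearMap.id : E →ₗ[R] E)).codRestrict _
      (fun v => Submodule.smul_mem_smul x.2 Submodule.mem_top))
    (Submodule.smul_le.2 fun r hr v _ => by
      have h0 : r * (x : R) = 0 := by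
        simpa [smul_eq_mul] using Submodule.mem_annihilator.mp hr x x.2
      rw [LinearMap.mem_ker]
      ext
      simp [smul_smul, h0])

lemma mulQuot_mk (R : Type*) [CommRing R] (I : Ideal R)
    (E : Type*) [AddCommGroup E] [Module R E] (x : I) (w : E) :
    (mulQuot R I E x (Submodule.Quotient.mk w) : E) = (x : R) • w := rfl

section

variable {R : Type*} [CommRing R] {I : Ideal R} {E : Type*} [AddCommGroup E] [Module R E]
  [Module (R ⧸ I.annihilator) ↥I] [IsScalarTower R (R ⧸ I.annihilator) ↥I]
  [Module (R ⧸ I.annihilator) (E →ₗ[R] ↥(I • (⊤ : Submodule R E)))]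
  [IsScalarTower R (R ⧸ I.annihilator) (E →ₗ[R] ↥(I • (⊤ : Submodule R E)))]

variable (R I E) in
/-- The canonical map `φ ⊗ x ↦ (v ↦ x·φ(v mod N·E))`, for any `A`-module structures on `I` and
`Hom_R(E, I·E)` compatible with the `R`-module structures. -/
noncomputable def canonicalMap :
    (Module.End (R ⧸ I.annihilator)
      (E ⧸ (I.annihilator • (⊤ : Submodule R E)))) ⊗[R ⧸ I.annihilator] ↥I
      →ₗ[R ⧸ I.annihilator] (E →ₗ[R] ↥(I • (⊤ : Submodule R E))) :=
  TensorProduct.lift <| LinearMap.mk₂ (R ⧸ I.annihilator)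
    (fun φ x => mulQuot R I E x ∘ₗ φ.restrictScalars R ∘ₗ Submodule.mkQ _)
    (fun φ φ' x => by ext v; simp)
    (fun a φ x => by
      obtain ⟨r, rfl⟩ := Ideal.Quotient.mk_surjective a
      rw [← Ideal.Quotient.algebraMap_eq, algebraMap_smul, algebraMap_smul]
      ext v; simp)
    (fun φ x y => by
      ext v
      obtain ⟨w, hw⟩ := Submodule.Quotient.mk_surjective _ (φ (Submodule.Quotient.mk v))
      simp [← hw, mulQuot_mk, add_smul])
    (fun a φ x => by
      obtain ⟨r, rfl⟩ := Ideal.Quotient.mk_surjective a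
      rw [← Ideal.Quotient.algebraMap_eq, algebraMap_smul, algebraMap_smul]
      ext v
      obtain ⟨w, hw⟩ := Submodule.Quotient.mk_surjective _ (φ (Submodule.Quotient.mk v))
      simp [← hw, mulQuot_mk, smul_smul])

lemma canonicalMap_tmul (φ : Module.End (R ⧸ I.annihilator)
      (E ⧸ (I.annihilator • (⊤ : Submodule R E)))) (x : I) (v w : E)
    (h : (Submodule.Quotient.mk w : E ⧸ (I.annihilator • (⊤ : Submodule R E)))
      = φ (Submodule.Quotient.mk v)) :
    (canonicalMap R I E (φ ⊗ₜ x) v : E) = (x : R) • w := by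
  simp [canonicalMap, ← h, mulQuot_mk]

variable (I) in
/-- The reduction modulo `N` of the rank one endomorphism `v ↦ f(v)·e` of `E`. -/
noncomputable def rankOne (f : E →ₗ[R] R) (e : E) :
    Module.End (R ⧸ I.annihilator) (E ⧸ (I.annihilator • (⊤ : Submodule R E))) :=
  LinearMap.extendScalarsOfSurjective Ideal.Quotient.mk_surjective <|
    Submodule.mapQ _ _ (f.smulRight e) (Submodule.smul_le.2 fun r hr v _ => by
      rw [Submodule.mem_comap, map_smul]
      exact Submodule.smul_mem_smul hr Submodule.mem_top)

omit [Module (R ⧸ I.annihilator) ↥I] [IsScalarTower R (R ⧸ I.annihilator) ↥I]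
  [Module (R ⧸ I.annihilator) (E →ₗ[R] ↥(I • (⊤ : Submodule R E)))]
  [IsScalarTower R (R ⧸ I.annihilator) (E →ₗ[R] ↥(I • (⊤ : Submodule R E)))] in
lemma rankOne_mk (f : E →ₗ[R] R) (e v : E) :
    rankOne I f e (Submodule.Quotient.mk v) = Submodule.Quotient.mk (f v • e) := rfl

/-- A linear form on `E` maps `I·E` into `I`. -/
def coeffMap (f : E →ₗ[R] R) : ↥(I • (⊤ : Submodule R E)) →ₗ[R] I :=
  (f ∘ₗ Submodule.subtype _).codRestrict I (fun y => by
    have : I • (⊤ : Submodule R E) ≤ Submodule.comap f I :=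
      Submodule.smul_le.2 fun r hr v _ => by
        simpa using I.mul_mem_right _ hr
    exact this y.2)

variable {n : ℕ} (e : Fin n → E) (f : Fin n → E →ₗ[R] R)

omit [Module (R ⧸ I.annihilator) ↥I] [IsScalarTower R (R ⧸ I.annihilator) ↥I]
  [Module (R ⧸ I.annihilator) (E →ₗ[R] ↥(I • (⊤ : Submodule R E)))]
  [IsScalarTower R (R ⧸ I.annihilator) (E →ₗ[R] ↥(I • (⊤ : Submodule R E)))] in
/-- The expansion of an endomorphism of `E ⧸ N·E` in the rank one endomorphisms attached to a
dual basis of `E`; its coefficients are those of lifts `w i` of the `φ (e i)`. -/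
lemma sum_smul_rankOne (hef : ∀ v, ∑ i, f i v • e i = v)
    (φ : Module.End (R ⧸ I.annihilator) (E ⧸ (I.annihilator • (⊤ : Submodule R E))))
    (w : Fin n → E) (hw : ∀ i, (Submodule.Quotient.mk (w i) :
      E ⧸ (I.annihilator • (⊤ : Submodule R E))) = φ (Submodule.Quotient.mk (e i))) :
    ∑ i, ∑ j, algebraMap R (R ⧸ I.annihilator) (f j (w i)) • rankOne I (f i) (e j) = φ := by
  apply LinearMap.ext
  intro q
  obtain ⟨v, rfl⟩ := Submodule.Quotient.mk_surjective _ q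
  have h1 : φ (Submodule.Quotient.mk v) = Submodule.Quotient.mk (∑ i, f i v • w i) := by
    have h2 : (φ.restrictScalars R ∘ₗ Submodule.mkQ _) v = Submodule.mkQ _ (∑ i, f i v • w i) := by
      conv_lhs => rw [← hef v]
      rw [map_sum, map_sum]
      refine Finset.sum_congr rfl fun i _ => ?_
      rw [map_smul, map_smul]
      exact congrArg _ (hw i).symm
    exact h2
  have h3 : ∑ i, f i v • w i = ∑ i, ∑ j, f j (w i) • f i v • e j := by
    refine Finset.sum_congr rfl fun i _ => ?_
    conv_lhs => rw [← hef (w i), Finset.smul_sum]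
    exact Finset.sum_congr rfl fun j _ => smul_comm _ _ _
  rw [h1, h3, LinearMap.sum_apply]
  refine Eq.trans ?_ (map_sum (Submodule.mkQ _) _ _).symm
  refine Finset.sum_congr rfl fun i _ => ?_
  rw [LinearMap.sum_apply]
  refine Eq.trans ?_ (map_sum (Submodule.mkQ _) _ _).symm
  exact Finset.sum_congr rfl fun j _ => rfl

/-- The inverse of the canonical map attached to a dual basis `(e, f)` of `E`:
`g ↦ ∑ i j, (v ↦ f i v • e j) ⊗ f j (g (e i))`. -/
noncomputable def invMap :
    (E →ₗ[R] ↥(I • (⊤ : Submodule R E))) →+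
    (Module.End (R ⧸ I.annihilator)
      (E ⧸ (I.annihilator • (⊤ : Submodule R E)))) ⊗[R ⧸ I.annihilator] ↥I where
  toFun g := ∑ i, ∑ j, rankOne I (f i) (e j) ⊗ₜ coeffMap (f j) (g (e i))
  map_zero' := by simp
  map_add' g h := by simp [TensorProduct.tmul_add, Finset.sum_add_distrib]

lemma canonicalMap_invMap (hef : ∀ v, ∑ i, f i v • e i = v)
    (g : E →ₗ[R] ↥(I • (⊤ : Submodule R E))) :
    canonicalMap R I E (invMap e f g) = g := by
  ext v
  have h (i j : Fin n) := canonicalMap_tmul (rankOne I (f i) (e j)) (coeffMap (f j) (g (e i)))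
    v _ (rankOne_mk (f i) (e j) v).symm
  have hc (i j : Fin n) : (coeffMap (f j) (g (e i)) : R) = f j (g (e i)) := rfl
  simp only [invMap, AddMonoidHom.coe_mk, ZeroHom.coe_mk, map_sum, LinearMap.sum_apply,
    Submodule.coe_sum, h, hc]
  conv_rhs => rw [← hef v]
  simp only [map_sum, map_smul, Submodule.coe_sum, Submodule.coe_smul]
  refine Finset.sum_congr rfl fun i _ => ?_
  conv_rhs => rw [← hef (g (e i)), Finset.smul_sum]
  exact Finset.sum_congr rfl fun j _ => smul_comm _ _ _

lemma invMap_canonicalMap (hef : ∀ v, ∑ i, f i v • e i = v)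
    (t : (Module.End (R ⧸ I.annihilator)
      (E ⧸ (I.annihilator • (⊤ : Submodule R E)))) ⊗[R ⧸ I.annihilator] ↥I) :
    invMap e f (canonicalMap R I E t) = t := by
  induction t with
  | zero => simp
  | add s t hs ht => rw [map_add, map_add, hs, ht]
  | tmul φ x =>
    choose w hw using fun i => Submodule.Quotient.mk_surjective
      (I.annihilator • (⊤ : Submodule R E)) (φ (Submodule.Quotient.mk (e i)))
    -- Writing `w i` for a lift of `φ (e i)`, the coefficient `f j (x • w i)` is `f j (w i) • x`,
    -- and this scalar can be moved across the tensor product.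
    have hc (i j : Fin n) : coeffMap (f j) (canonicalMap R I E (φ ⊗ₜ x) (e i)) =
        algebraMap R (R ⧸ I.annihilator) (f j (w i)) • x := by
      rw [algebraMap_smul]
      ext
      change f j (canonicalMap R I E (φ ⊗ₜ x) (e i) : E) = _
      rw [canonicalMap_tmul φ x (e i) (w i) (hw i)]
      simp [mul_comm]
    conv_rhs => rw [← sum_smul_rankOne e f hef φ w hw]
    simp only [invMap, AddMonoidHom.coe_mk, ZeroHom.coe_mk, hc, TensorProduct.sum_tmul,
      TensorProduct.smul_tmul]

end

theorem stmt_1 (R : Type*) [CommRing R] (I : Ideal R) (hI : I ^ 2 = ⊥)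
    (E : Type*) [AddCommGroup E] [Module R E]
    [Module.Finite R E] [Module.Projective R E] :
    -- `A = R ⧸ N` with `N = Ann_R(I)`;  `E_A = E ⧸ N·E` is an `A`-module, and
    -- `I` and `Hom_R(E, I·E)` are `A`-modules since `N` annihilates them.
    letI : Module (R ⧸ I.annihilator) ↥I := moduleA_I R I
    letI : Module (R ⧸ I.annihilator) (E →ₗ[R] ↥(I • (⊤ : Submodule R E))) :=
      moduleA_Hom R I E
    -- the canonical map `End_A(E_A) ⊗_A I → Hom_R(E, I·E)` is a well-defined
    -- isomorphism of `A`-modules: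
    ∃ ψ : (Module.End (R ⧸ I.annihilator)
            (E ⧸ (I.annihilator • (⊤ : Submodule R E)))) ⊗[R ⧸ I.annihilator] ↥I
          ≃ₗ[R ⧸ I.annihilator] (E →ₗ[R] ↥(I • (⊤ : Submodule R E))),
      ∀ (φ : Module.End (R ⧸ I.annihilator)
              (E ⧸ (I.annihilator • (⊤ : Submodule R E))))
        (x : ↥I) (v w : E),
        (Submodule.Quotient.mk w : E ⧸ (I.annihilator • (⊤ : Submodule R E)))
            = φ (Submodule.Quotient.mk v) →
        (↑((ψ (φ ⊗ₜ x)) v) : E) = (x : R) • w := by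
  let _ : Module (R ⧸ I.annihilator) ↥I := moduleA_I R I
  let _ : Module (R ⧸ I.annihilator) (E →ₗ[R] ↥(I • (⊤ : Submodule R E))) :=
    moduleA_Hom R I E
  have : IsScalarTower R (R ⧸ I.annihilator) ↥I := ⟨fun r a x => by
    obtain ⟨s, rfl⟩ := Ideal.Quotient.mk_surjective a
    exact mul_smul r s x⟩
  have : IsScalarTower R (R ⧸ I.annihilator) (E →ₗ[R] ↥(I • (⊤ : Submodule R E))) :=
    ⟨fun r a g => by
      obtain ⟨s, rfl⟩ := Ideal.Quotient.mk_surjective a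
      exact mul_smul r s g⟩
  -- A splitting `s` of a surjection `p : R^n → E` provides the dual basis.
  obtain ⟨n, p, s, -, -, hps⟩ := Module.Finite.exists_comp_eq_id_of_projective R E
  let e : Fin n → E := fun i => p fun j => if i = j then 1 else 0
  let f : Fin n → E →ₗ[R] R := fun i => LinearMap.proj i ∘ₗ s
  have hef (v : E) : ∑ i, f i v • e i = v := by
    have h := LinearMap.congr_fun hps v
    rw [LinearMap.comp_apply, LinearMap.pi_apply_eq_sum_univ p (s v)] at h
    exact h
  exact ⟨{ canonicalMap R I E with
      invFun := invMap e f
      left_inv := invMap_canonicalMap e f hef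
      right_inv := canonicalMap_invMap e f hef }, canonicalMap_tmul⟩
end

section
/- Let R be a commutative ring and let f, g ∈ R be a regular sequence, i.e. f is a nonzerodivisor on R and the image of g is a nonzerodivisor on R/fR. Set I = (f, g). Then for every integer n ≥ 0 one has the equality of ideals (f) ∩ Iⁿ⁺¹ = f·Iⁿ. -/
/-!
Every product of `n + 1` elements of `I = (f, g)` is, modulo `f·Iⁿ`, a multiple of `gⁿ⁺¹`, so
`Iⁿ⁺¹ = f·Iⁿ + (gⁿ⁺¹)` (`pow_succ_le_sup`). An element `a + gⁿ⁺¹ r` of this sum with `a ∈ f·Iⁿ`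
that lies in `(f)` has `gⁿ⁺¹ r ∈ (f)`. Since `g` is a nonzerodivisor modulo `f`, this forces
`r ∈ (f)`, and then `gⁿ⁺¹ r ∈ f·Iⁿ` because `gⁿ⁺¹ ∈ Iⁿ`.
-/

theorem pow_succ_le_sup {R : Type*} [CommRing R] (f g : R) (n : ℕ) :
    (Ideal.span {f, g}) ^ (n + 1)
      ≤ Ideal.span {f} * (Ideal.span {f, g}) ^ n ⊔ Ideal.span {g ^ (n + 1)} := by
  induction n with
  | zero => simp [Ideal.span_insert]
  | succ n ih =>
    have hI : Ideal.span {f, g} = Ideal.span {f} ⊔ Ideal.span {g} := Ideal.span_insert f {g}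
    have hgI : Ideal.span {g} ≤ Ideal.span {f, g} := hI ▸ le_sup_right
    calc (Ideal.span {f, g}) ^ (n + 1 + 1)
        = Ideal.span {f} * Ideal.span {f, g} ^ (n + 1)
            ⊔ Ideal.span {g} * Ideal.span {f, g} ^ (n + 1) := by
          rw [pow_succ' _ (n + 1), ← Ideal.sup_mul, ← hI]
      _ ≤ _ := by
          refine sup_le le_sup_left ((Ideal.mul_mono_right ih).trans ?_)
          rw [Ideal.mul_sup, Ideal.span_singleton_mul_span_singleton, ← pow_succ',
            mul_left_comm]
          refine sup_le_sup_right (Ideal.mul_mono_right ?_) _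
          rw [pow_succ' _ n]
          exact Ideal.mul_mono_left hgI

theorem stmt_3 (R : Type*) [CommRing R] (f g : R)
    (hf : ∀ x : R, f * x = 0 → x = 0)
    (hg : ∀ x : R, g * x ∈ Ideal.span {f} → x ∈ Ideal.span {f})
    (n : ℕ) :
    Ideal.span {f} ⊓ (Ideal.span {f, g}) ^ (n + 1)
      = Ideal.span {f} * (Ideal.span {f, g}) ^ n := by
  have hgpow : ∀ (m : ℕ) (r : R), g ^ m * r ∈ Ideal.span {f} → r ∈ Ideal.span {f} := by
    intro m
    induction m with
    | zero => intro r h; simpa using h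
    | succ m ih =>
      intro r h
      exact ih r (hg _ (by rwa [← mul_assoc, ← pow_succ']))
  have hgI : g ∈ Ideal.span {f, g} := Ideal.subset_span (by simp)
  apply le_antisymm
  · rintro x ⟨hxf, hxI⟩
    obtain ⟨a, ha, b, hb, rfl⟩ := Submodule.mem_sup.1 (pow_succ_le_sup f g n hxI)
    obtain ⟨r, rfl⟩ := Ideal.mem_span_singleton'.1 hb
    have hr : r ∈ Ideal.span {f} := by
      apply hgpow (n + 1)
      rw [mul_comm]
      exact (Ideal.add_mem_iff_right _ (Ideal.mul_le_left ha)).1 hxf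
    exact add_mem ha (Ideal.mul_mem_mul hr
      (Ideal.pow_le_pow_right n.le_succ (Ideal.pow_mem_pow hgI (n + 1))))
  · refine le_inf Ideal.mul_le_left ?_
    rw [pow_succ']
    exact Ideal.mul_mono_left (Ideal.span_mono (by simp))
end

section
/- Let τ ⊆ ℝⁿ be an (n−1)-dimensional strictly convex polyhedral cone and let ρ = ℝ_{≥0}·x be a ray with x ∉ span(τ). Then σ = τ + ρ is an n-dimensional strictly convex polyhedral cone, every face of τ is a face of σ, for every face κ of τ the cone κ + ρ is a face of σ, and every face of σ is of one of these two forms. -/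
/-!
Since `x ∉ span τ`, there is a functional `f` vanishing on `τ` with `f x = 1`. It reads off the
coefficient of `x` in an element `t + c • x` of `τ + ρ`, which gives strict convexity. Adding a
multiple of `f` to a functional `m` changes `m x` to any prescribed value without changing `m`
on `τ`: the value `1` makes a face of `τ` a face of `τ + ρ`, and the value `0` makes `κ + ρ` a
face for every face `κ` of `τ`. Conversely, a functional `m` that is nonnegative on `τ + ρ` has
`m x > 0` or `m x = 0`, and so cuts out a face of the first or of the second form.
-/

open Pointwise

/-- Ambient space `ℝⁿ`. -/
abbrev V (n : ℕ) := Fin n → ℝ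

/-- The polyhedral cone generated by a finite set of vectors:
all nonnegative linear combinations. -/
def coneOf {n : ℕ} (s : Finset (V n)) : Set (V n) :=
  {x | ∃ c : V n → ℝ, (∀ v, 0 ≤ c v) ∧ x = ∑ v ∈ s, c v • v}

/-- A polyhedral cone: the cone generated by finitely many vectors. -/
def IsPolyhedralCone {n : ℕ} (σ : Set (V n)) : Prop :=
  ∃ s : Finset (V n), σ = coneOf s

/-- A cone is strictly convex if `σ ∩ (−σ) = {0}`. -/
def IsStrictlyConvexCone {n : ℕ} (σ : Set (V n)) : Prop :=
  σ ∩ (-σ) = {0}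

/-- `τ` is a face of `σ`: cut out on `σ` by a linear functional nonnegative on `σ`. -/
def IsFaceOf {n : ℕ} (τ σ : Set (V n)) : Prop :=
  ∃ m : V n →ₗ[ℝ] ℝ, (∀ x ∈ σ, 0 ≤ m x) ∧ τ = {x ∈ σ | m x = 0}

/-- The dimension of a cone: the dimension of its linear span. -/
noncomputable def dimCone {n : ℕ} (σ : Set (V n)) : ℕ :=
  Module.finrank ℝ (Submodule.span ℝ σ)

/-- The ray `ℝ_{≥0}·x`. -/
def rayGen {n : ℕ} (x : V n) : Set (V n) :=
  {y | ∃ c : ℝ, 0 ≤ c ∧ y = c • x}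

/-- The set `σ(1)` of rays (one-dimensional faces) of `σ`. -/
def raysOf {n : ℕ} (σ : Set (V n)) : Set (Set (V n)) :=
  {ρ | IsFaceOf ρ σ ∧ dimCone ρ = 1}

/-- `η` is a facet of `σ`: a face of dimension `dim σ − 1`. -/
def IsFacetOf {n : ℕ} (η σ : Set (V n)) : Prop :=
  IsFaceOf η σ ∧ dimCone η = dimCone σ - 1

/-- The cone hull of an arbitrary set: all nonnegative combinations of
finitely many of its elements. -/
def coneHull {n : ℕ} (s : Set (V n)) : Set (V n) :=
  {x | ∃ t : Finset (V n), ↑t ⊆ s ∧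
    ∃ c : V n → ℝ, (∀ v, 0 ≤ c v) ∧ x = ∑ v ∈ t, c v • v}

/-- `σ'`: the cone generated by the union of the rays of `σ` other than `ρ`. -/
def primeCone {n : ℕ} (σ ρ : Set (V n)) : Set (V n) :=
  coneHull (⋃ ρ' ∈ raysOf σ \ {ρ}, ρ')

/-- `x` is beneath the supporting hyperplane `H_η` of the facet `η` of `κ`:
every witnessing functional is positive at `x`. -/
def Beneath {n : ℕ} (κ η : Set (V n)) (x : V n) : Prop :=
  ∀ m : V n →ₗ[ℝ] ℝ, (∀ y ∈ κ, 0 ≤ m y) → η = {y ∈ κ | m y = 0} → 0 < m x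

/-- `x` is beyond the supporting hyperplane `H_η` of the facet `η` of `κ`:
every witnessing functional is negative at `x`. -/
def Beyond {n : ℕ} (κ η : Set (V n)) (x : V n) : Prop :=
  ∀ m : V n →ₗ[ℝ] ℝ, (∀ y ∈ κ, 0 ≤ m y) → η = {y ∈ κ | m y = 0} → m x < 0

/-- `σ` (an `n`-dimensional cone in `ℝⁿ`) is a pyramidal extension of `σ'` by the
ray `ρ`, where `σ'` is the cone generated by the rays of `σ` other than `ρ`:
either `dim σ' = n − 1`, or `dim σ' = n` and there is precisely one facet `η` of
`σ'` such that the nonzero points of `ρ` are beyond `H_η`, while they are beneath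
`H_{η'}` for every other facet `η'` of `σ'`. -/
def IsPyramidalExtensionBy {n : ℕ} (σ ρ : Set (V n)) : Prop :=
  dimCone (primeCone σ ρ) = n - 1 ∨
  (dimCone (primeCone σ ρ) = n ∧
    ∃ η, IsFacetOf η (primeCone σ ρ) ∧
      (∀ x ∈ ρ, x ≠ 0 → Beyond (primeCone σ ρ) η x) ∧
      (∀ η', IsFacetOf η' (primeCone σ ρ) → η' ≠ η →
        ∀ x ∈ ρ, x ≠ 0 → Beneath (primeCone σ ρ) η' x))

/-- A fan in `ℝⁿ`: a finite collection of strictly convex polyhedral cones closed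
under taking faces, in which any two cones intersect in a common face. -/
def IsFan {n : ℕ} (Δ : Set (Set (V n))) : Prop :=
  Δ.Finite ∧
  (∀ σ ∈ Δ, IsPolyhedralCone σ ∧ IsStrictlyConvexCone σ) ∧
  (∀ σ ∈ Δ, ∀ τ, IsFaceOf τ σ → τ ∈ Δ) ∧
  (∀ σ ∈ Δ, ∀ τ ∈ Δ, IsFaceOf (σ ∩ τ) σ ∧ IsFaceOf (σ ∩ τ) τ)

lemma mem_add_rayGen {n : ℕ} {A : Set (V n)} {x y : V n} :
    y ∈ A + rayGen x ↔ ∃ t ∈ A, ∃ c : ℝ, 0 ≤ c ∧ y = t + c • x := by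
  constructor
  · rintro ⟨t, ht, _, ⟨c, hc, rfl⟩, rfl⟩
    exact ⟨t, ht, c, hc, rfl⟩
  · rintro ⟨t, ht, c, hc, rfl⟩
    exact ⟨t, ht, _, ⟨c, hc, rfl⟩, rfl⟩

lemma coneOf_insert {n : ℕ} (s : Finset (V n)) (x : V n) (hx : x ∉ s) :
    coneOf s + rayGen x = coneOf (insert x s) := by
  ext y
  rw [mem_add_rayGen]
  constructor
  · rintro ⟨_, ⟨c, hc, rfl⟩, d, hd, rfl⟩
    refine ⟨Function.update c x d, fun v => ?_, ?_⟩
    · by_cases h : v = x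
      · subst h; simpa using hd
      · simpa [h] using hc v
    · rw [Finset.sum_insert hx, add_comm, Function.update_self]
      congr 1
      refine Finset.sum_congr rfl fun v hv => ?_
      have : v ≠ x := fun h => hx (h ▸ hv)
      simp [this]
  · rintro ⟨c, hc, rfl⟩
    exact ⟨_, ⟨c, hc, rfl⟩, c x, hc x, by rw [Finset.sum_insert hx, add_comm]⟩

lemma subset_coneOf {n : ℕ} {s : Finset (V n)} {v : V n} (hv : v ∈ s) : v ∈ coneOf s := by
  refine ⟨Pi.single v 1, fun w => ?_, ?_⟩
  · by_cases h : w = v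
    · subst h; simp
    · simp [h]
  · rw [Finset.sum_eq_single_of_mem v hv]
    · simp
    · intro w _ h
      simp [h]

/-- If `m` vanishes at `x`, then for `σ = τ + ℝ_{≥0} x` the subset of `σ` where `m = 0` is the
sum of the corresponding subset of `τ` and the ray. -/
lemma face_eq_of_apply_eq_zero {n : ℕ} {τ : Set (V n)} {x : V n} {m : V n →ₗ[ℝ] ℝ}
    (hmx : m x = 0) :
    {y ∈ τ + rayGen x | m y = 0} = {y ∈ τ | m y = 0} + rayGen x := by
  ext y
  simp only [mem_add_rayGen, Set.mem_ofPred_eq]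
  constructor
  · rintro ⟨⟨t, ht, c, hc, rfl⟩, h⟩
    exact ⟨t, ⟨ht, by simpa [hmx] using h⟩, c, hc, rfl⟩
  · rintro ⟨t, ⟨ht, h⟩, c, hc, rfl⟩
    exact ⟨⟨t, ht, c, hc, rfl⟩, by simp [hmx, h]⟩

lemma face_eq_of_apply_pos {n : ℕ} {τ : Set (V n)} {x : V n} {m : V n →ₗ[ℝ] ℝ}
    (hm : ∀ y ∈ τ, 0 ≤ m y) (hmx : 0 < m x) :
    {y ∈ τ + rayGen x | m y = 0} = {y ∈ τ | m y = 0} := by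
  ext y
  simp only [mem_add_rayGen, Set.mem_ofPred_eq]
  constructor
  · rintro ⟨⟨t, ht, c, hc, rfl⟩, h⟩
    have h1 := hm t ht
    have h' : m t + c * m x = 0 := by simpa using h
    have h2 : c = 0 := by
      by_contra hne
      have := mul_pos (lt_of_le_of_ne hc (Ne.symm hne)) hmx
      linarith
    subst h2
    exact ⟨by simpa using ht, h⟩
  · rintro ⟨ht, h⟩
    exact ⟨⟨y, ht, 0, le_rfl, by simp⟩, h⟩

lemma nonneg_on_add_rayGen {n : ℕ} {τ : Set (V n)} {x : V n} {m : V n →ₗ[ℝ] ℝ}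
    (hm : ∀ y ∈ τ, 0 ≤ m y) (hmx : 0 ≤ m x) : ∀ y ∈ τ + rayGen x, 0 ≤ m y := by
  intro y hy
  obtain ⟨t, ht, c, hc, rfl⟩ := mem_add_rayGen.1 hy
  have := mul_nonneg hc hmx
  have := hm t ht
  simp only [map_add, map_smul, smul_eq_mul]
  linarith

theorem stmt_4 {n : ℕ} (τ : Set (V n)) (x : V n)
    (hpoly : IsPolyhedralCone τ) (hconv : IsStrictlyConvexCone τ)
    (hdim : dimCone τ = n - 1)
    (hx : x ∉ Submodule.span ℝ τ) :
    IsPolyhedralCone (τ + rayGen x) ∧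
    IsStrictlyConvexCone (τ + rayGen x) ∧
    dimCone (τ + rayGen x) = n ∧
    (∀ κ, IsFaceOf κ τ → IsFaceOf κ (τ + rayGen x)) ∧
    (∀ κ, IsFaceOf κ τ → IsFaceOf (κ + rayGen x) (τ + rayGen x)) ∧
    (∀ φ, IsFaceOf φ (τ + rayGen x) →
      IsFaceOf φ τ ∨ ∃ κ, IsFaceOf κ τ ∧ φ = κ + rayGen x) := by
  have h0 : (0 : V n) ∈ τ := by
    have : (0 : V n) ∈ τ ∩ -τ := by rw [hconv]; rfl
    exact this.1
  have hsub : τ ⊆ τ + rayGen x := fun t ht =>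
    mem_add_rayGen.2 ⟨t, ht, 0, le_rfl, by simp⟩
  have hxmem : x ∈ τ + rayGen x :=
    mem_add_rayGen.2 ⟨0, h0, 1, zero_le_one, by simp⟩
  obtain ⟨f, hfτ, hfx⟩ : ∃ f : V n →ₗ[ℝ] ℝ, (∀ t ∈ τ, f t = 0) ∧ f x = 1 := by
    obtain ⟨g, hgx, hg⟩ := Submodule.exists_le_ker_of_notMem hx
    refine ⟨(g x)⁻¹ • g, fun t ht => ?_, by simp [hgx]⟩
    have : g t = 0 := hg (Submodule.subset_span ht)
    simp [this]
  have modify : ∀ (m : V n →ₗ[ℝ] ℝ) (a : ℝ),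
      ∃ m' : V n →ₗ[ℝ] ℝ, (∀ t ∈ τ, m' t = m t) ∧ m' x = a := fun m a =>
    ⟨m + (a - m x) • f, fun t ht => by simp [hfτ t ht], by simp [hfx]⟩
  refine ⟨?_, ?_, ?_, ?_, ?_, ?_⟩
  · obtain ⟨s, rfl⟩ := hpoly
    exact ⟨insert x s, coneOf_insert s x fun h => hx (Submodule.subset_span (subset_coneOf h))⟩
  · refine Set.Subset.antisymm ?_ ?_
    · rintro y ⟨hy, hy'⟩
      obtain ⟨t, ht, c, hc, rfl⟩ := mem_add_rayGen.1 hy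
      obtain ⟨t', ht', c', hc', h⟩ := mem_add_rayGen.1 hy'
      have hf := congrArg f h
      simp only [map_neg, map_add, map_smul, hfτ t ht, hfτ t' ht', hfx, smul_eq_mul] at hf
      obtain rfl : c = 0 := by linarith
      obtain rfl : c' = 0 := by linarith
      rw [← hconv]
      simp only [zero_smul, add_zero] at h ⊢
      exact ⟨ht, by rw [Set.mem_neg, h]; exact ht'⟩
    · rintro y rfl
      exact ⟨hsub h0, by rw [Set.mem_neg, neg_zero]; exact hsub h0⟩
  · -- `span τ` is strictly contained in the span of `τ + ρ`, so the dimension exceeds `n - 1`.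
    have hlt : Submodule.span ℝ τ < Submodule.span ℝ (τ + rayGen x) :=
      lt_of_le_of_ne (Submodule.span_mono hsub)
        fun h => hx (h ▸ Submodule.subset_span hxmem)
    have h1 := Submodule.finrank_lt_finrank_of_lt hlt
    have h2 := Submodule.finrank_le (Submodule.span ℝ (τ + rayGen x))
    rw [Module.finrank_fin_fun] at h2
    unfold dimCone at hdim ⊢
    omega
  · rintro κ ⟨m, hm, rfl⟩
    obtain ⟨m', hm', hx'⟩ := modify m 1
    have hnn : ∀ y ∈ τ, 0 ≤ m' y := fun y hy => by rw [hm' y hy]; exact hm y hy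
    refine ⟨m', nonneg_on_add_rayGen hnn (by rw [hx']; exact zero_le_one), ?_⟩
    rw [face_eq_of_apply_pos hnn (by rw [hx']; exact one_pos)]
    exact Set.sep_ext_iff.2 fun y hy => by rw [hm' y hy]
  · rintro κ ⟨m, hm, rfl⟩
    obtain ⟨m', hm', hx'⟩ := modify m 0
    have hnn : ∀ y ∈ τ, 0 ≤ m' y := fun y hy => by rw [hm' y hy]; exact hm y hy
    refine ⟨m', nonneg_on_add_rayGen hnn hx'.ge, ?_⟩
    rw [face_eq_of_apply_eq_zero hx']
    congr 1
    exact Set.sep_ext_iff.2 fun y hy => by rw [hm' y hy]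
  · rintro φ ⟨m, hm, rfl⟩
    have hnn : ∀ y ∈ τ, 0 ≤ m y := fun y hy => hm y (hsub hy)
    rcases (hm x hxmem).eq_or_lt with h | h
    · exact Or.inr ⟨_, ⟨m, hnn, rfl⟩, face_eq_of_apply_eq_zero h.symm⟩
    · exact Or.inl ⟨m, hnn, face_eq_of_apply_pos hnn h⟩
end

section
/- Let σ ⊆ ℝⁿ be an n-dimensional strictly convex polyhedral cone, ρ ∈ σ(1) a ray of σ, and suppose σ is a pyramidal extension of σ' by ρ with dim σ' = n, with distinguished facet η of σ' and σ'' = η + ρ. Then every face of η is a face of σ''; for every face τ of η, the cone τ + ρ is a face of σ''; and every face of σ'' is of one of these two forms. -/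
/-!
The facet `η` is cut out of `σ'` by a functional `m₀` which vanishes on `η`, and `ρ` is the ray
through a vector `r` beyond the hyperplane of `η`, so `m₀ r < 0`. Hence a functional can be changed
by multiples of `m₀` to take any prescribed value at `r` without changing it on `η`. A face of `η`
cut out by `m` therefore becomes a face of `η + ρ` by adjusting the value at `r` to be `1`, and its
sum with `ρ` becomes a face by adjusting the value to be `0`. Conversely, a functional nonnegative on
`η + ρ` is nonnegative on `η` and at `r`, and the face it cuts out is of the first or the second
form according as its value at `r` is positive or zero.
-/

open Pointwise

theorem smul_mem_coneOf {n : ℕ} {s : Finset (V n)} {x : V n} (hx : x ∈ coneOf s) {c : ℝ}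
    (hc : 0 ≤ c) : c • x ∈ coneOf s := by
  obtain ⟨d, hd, rfl⟩ := hx
  exact ⟨fun v => c * d v, fun v => mul_nonneg hc (hd v), by simp [Finset.smul_sum, mul_smul]⟩

/-- Strict convexity makes a one-dimensional face a half-line rather than a full line. -/
theorem exists_eq_rayGen {n : ℕ} {σ ρ : Set (V n)} (hpoly : IsPolyhedralCone σ)
    (hconv : IsStrictlyConvexCone σ) (hρ : ρ ∈ raysOf σ) : ∃ r : V n, r ≠ 0 ∧ ρ = rayGen r := by
  obtain ⟨s, rfl⟩ := hpoly
  obtain ⟨⟨m, -, hρm⟩, hd⟩ := hρ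
  obtain ⟨r, hr, hr0⟩ : ∃ r ∈ ρ, r ≠ 0 := by
    by_contra! h
    have hspan : Submodule.span ℝ ρ = ⊥ := Submodule.span_eq_bot.2 h
    rw [dimCone, hspan, finrank_bot] at hd
    exact zero_ne_one hd
  have hrρ := hr
  rw [hρm] at hrρ
  refine ⟨r, hr0, Set.Subset.antisymm (fun x hx => ?_) ?_⟩
  · have hne : (⟨r, Submodule.subset_span hr⟩ : Submodule.span ℝ ρ) ≠ 0 := by
      simpa [Subtype.ext_iff] using hr0
    obtain ⟨c, hc⟩ := exists_smul_eq_of_finrank_eq_one hd hne ⟨x, Submodule.subset_span hx⟩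
    have hc : c • r = x := congrArg Subtype.val hc
    refine ⟨c, ?_, hc.symm⟩
    -- If `c < 0`, then `-r` is a positive multiple of `x`, against strict convexity.
    by_contra! hneg
    have hx' := hx
    rw [hρm] at hx'
    have h1 : -r ∈ coneOf s := by
      have := smul_mem_coneOf hx'.1 (c := -c⁻¹) (by simpa using (inv_lt_zero.2 hneg).le)
      rwa [← hc, smul_smul, neg_mul, inv_mul_cancel₀ hneg.ne, neg_one_smul] at this
    have h2 : r ∈ coneOf s ∩ -coneOf s := ⟨hrρ.1, h1⟩
    rw [hconv] at h2
    exact hr0 h2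
  · rintro x ⟨c, hc, rfl⟩
    rw [hρm]
    exact ⟨smul_mem_coneOf hrρ.1 hc, by simp [hrρ.2]⟩

/-- A functional on `η` extends to take any prescribed value `a` at a vector off the hyperplane
containing `η`. -/
theorem exists_eqOn_apply_eq {n : ℕ} {η : Set (V n)} {r : V n} {m₀ : V n →ₗ[ℝ] ℝ}
    (h₀ : ∀ x ∈ η, m₀ x = 0) (hr : m₀ r ≠ 0) (m : V n →ₗ[ℝ] ℝ) (a : ℝ) :
    ∃ m' : V n →ₗ[ℝ] ℝ, (∀ x ∈ η, m' x = m x) ∧ m' r = a := by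
  refine ⟨m + ((a - m r) / m₀ r) • m₀, fun x hx => by simp [h₀ x hx], ?_⟩
  simp [div_mul_cancel₀ _ hr]

/-!
STATEMENT 5: Let `σ ⊆ ℝⁿ` be an `n`-dimensional strictly convex polyhedral cone,
`ρ ∈ σ(1)`, and suppose `σ` is a pyramidal extension of `σ'` by `ρ` with
`dim σ' = n`, with distinguished facet `η` of `σ'` and `σ'' = η + ρ`.  Then the
faces of `σ''` are exactly the faces of `η` and the cones `τ + ρ` for `τ` a face
of `η`.
-/

theorem stmt_5 {n : ℕ} (σ ρ σ' η : Set (V n))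
    (hpoly : IsPolyhedralCone σ) (hconv : IsStrictlyConvexCone σ)
    (hdim : dimCone σ = n)
    (hρ : ρ ∈ raysOf σ)
    (hσ' : σ' = primeCone σ ρ) (hdim' : dimCone σ' = n)
    (hη : IsFacetOf η σ')
    (hbeyond : ∀ x ∈ ρ, x ≠ 0 → Beyond σ' η x)
    (hbeneath : ∀ η', IsFacetOf η' σ' → η' ≠ η → ∀ x ∈ ρ, x ≠ 0 → Beneath σ' η' x) :
    (∀ κ, IsFaceOf κ η → IsFaceOf κ (η + ρ)) ∧
    (∀ κ, IsFaceOf κ η → IsFaceOf (κ + ρ) (η + ρ)) ∧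
    (∀ φ, IsFaceOf φ (η + ρ) → IsFaceOf φ η ∨ ∃ κ, IsFaceOf κ η ∧ φ = κ + ρ) := by
  obtain ⟨r, hr0, rfl⟩ := exists_eq_rayGen hpoly hconv hρ
  have hrρ : r ∈ rayGen r := ⟨1, zero_le_one, by simp⟩
  have h0ρ : (0 : V n) ∈ rayGen r := ⟨0, le_rfl, by simp⟩
  obtain ⟨⟨m₀, hm₀, hηm⟩, -⟩ := hη
  have hm₀r : m₀ r ≠ 0 := (hbeyond r hrρ hr0 m₀ hm₀ hηm).ne
  have h₀ : ∀ x ∈ η, m₀ x = 0 := by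
    intro x hx
    rw [hηm] at hx
    exact hx.2
  have h0η : (0 : V n) ∈ η := by
    rw [hηm, hσ']
    exact ⟨⟨∅, by simp, 0, by simp, by simp⟩, by simp⟩
  -- The face of `η + ρ` cut out by a functional positive at `r` lies in `η`.
  have key_pos : ∀ m : V n →ₗ[ℝ] ℝ, (∀ x ∈ η, 0 ≤ m x) → 0 < m r →
      {x ∈ η | m x = 0} = {x ∈ η + rayGen r | m x = 0} := by
    intro m hm hmr
    refine Set.Subset.antisymm (fun x hx => ⟨⟨x, hx.1, 0, h0ρ, add_zero x⟩, hx.2⟩) ?_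
    rintro _ ⟨⟨x, hx, _, ⟨c, hc, rfl⟩, rfl⟩, h⟩
    simp only [map_add, map_smul, smul_eq_mul] at h
    have h1 := hm x hx
    have h2 := mul_nonneg hc hmr.le
    have hc0 : c = 0 := (mul_eq_zero.1 (by linarith : c * m r = 0)).resolve_right hmr.ne'
    subst hc0
    simpa using And.intro hx h
  -- The face of `η + ρ` cut out by a functional vanishing at `r` contains `ρ`.
  have key_zero : ∀ m : V n →ₗ[ℝ] ℝ, m r = 0 →
      {x ∈ η | m x = 0} + rayGen r = {x ∈ η + rayGen r | m x = 0} := by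
    intro m hmr
    apply Set.Subset.antisymm
    · rintro _ ⟨x, hx, _, ⟨c, hc, rfl⟩, rfl⟩
      exact ⟨⟨x, hx.1, _, ⟨c, hc, rfl⟩, rfl⟩, by simp [hx.2, hmr]⟩
    · rintro _ ⟨⟨x, hx, _, ⟨c, hc, rfl⟩, rfl⟩, h⟩
      exact ⟨x, ⟨hx, by simpa [hmr] using h⟩, _, ⟨c, hc, rfl⟩, rfl⟩
  have nonneg : ∀ m : V n →ₗ[ℝ] ℝ, (∀ x ∈ η, 0 ≤ m x) → 0 ≤ m r →
      ∀ x ∈ η + rayGen r, 0 ≤ m x := by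
    rintro m hm hmr _ ⟨x, hx, _, ⟨c, hc, rfl⟩, rfl⟩
    simpa using add_nonneg (hm x hx) (mul_nonneg hc hmr)
  refine ⟨?_, ?_, ?_⟩
  · rintro κ ⟨m, hm, rfl⟩
    obtain ⟨m', hm', hr'⟩ := exists_eqOn_apply_eq h₀ hm₀r m 1
    have hpos : ∀ x ∈ η, 0 ≤ m' x := fun x hx => by rw [hm' x hx]; exact hm x hx
    refine ⟨m', nonneg m' hpos (by simp [hr']), ?_⟩
    rw [← key_pos m' hpos (by simp [hr'])]
    ext x
    exact and_congr_right fun hx => by rw [hm' x hx]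
  · rintro κ ⟨m, hm, rfl⟩
    obtain ⟨m', hm', hr'⟩ := exists_eqOn_apply_eq h₀ hm₀r m 0
    have hpos : ∀ x ∈ η, 0 ≤ m' x := fun x hx => by rw [hm' x hx]; exact hm x hx
    refine ⟨m', nonneg m' hpos hr'.ge, ?_⟩
    rw [← key_zero m' hr']
    congr 1
    ext x
    exact and_congr_right fun hx => by rw [hm' x hx]
  · rintro φ ⟨m, hm, rfl⟩
    have hmη : ∀ x ∈ η, 0 ≤ m x := fun x hx => hm x ⟨x, hx, 0, h0ρ, add_zero x⟩
    have hmr : 0 ≤ m r := hm r ⟨0, h0η, r, hrρ, zero_add r⟩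
    rcases hmr.eq_or_lt with h | h
    · exact Or.inr ⟨_, ⟨m, hmη, rfl⟩, (key_zero m h.symm).symm⟩
    · exact Or.inl ⟨m, hmη, (key_pos m hmη h).symm⟩
end

section
/- Let σ ⊆ ℝⁿ be an n-dimensional strictly convex polyhedral cone, ρ ∈ σ(1) a ray of σ, and suppose σ is a pyramidal extension of σ' by ρ with dim σ' = n, with distinguished facet η of σ'. Then: every proper face of σ' other than η is a face of σ; for every proper face τ of η, the cone τ + ρ is a proper face of σ; and every proper face of σ is of one of these two forms. -/
/-!
A polyhedral cone that is strictly convex is generated by one vector on each of its rays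
(`exists_ray_generators`): in an irredundant generating set, the convex hull of the generators other
than `v` is disjoint from the line through `v`, and Hahn–Banach separation produces a functional
exposing the ray of `v`. Hence `σ = σ' + ρ` with `σ'` finitely generated, and a functional that is
nonnegative on `σ'` and at the generator `v` of `ρ` is nonnegative on `σ`; the face of `σ` it cuts
out is its face of `σ'` if it is positive at `v`, and that face plus `ρ` if it vanishes at `v`.

The tool for controlling signs at `v` is `facet_induction`: a nonzero functional nonnegative on the
full-dimensional cone `σ'` is a sum of functionals cutting out facets. By hypothesis those of facets
other than `η` are positive at `v`, and that of `η`, called `h`, is negative at `v`.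

* A proper face `κ ≠ η` of `σ'` lies in a facet other than `η`. Adding a large multiple of the
  functional of that facet to a functional cutting out `κ` makes it positive at `v`, so `κ` is a
  face of `σ`.
* For a proper face `κ` of `η`, take such a functional `p` with `p v > 0` cutting out `κ`, and add
  the multiple of `h` making the sum vanish at `v`. This cuts out `κ + ρ`.
* Let `m` cut out a proper face of `σ`. Since `m v ≥ 0`, it does not cut out `η` on `σ'`. If
  `m v > 0` the face is a face of `σ'`. If `m v = 0`, some facet summand of `m` belongs to `η`, so
  the zero set of `m` in `σ'` is a proper face of `η`.
-/

open Pointwise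

/-! ### Cones as spans over the nonnegative reals -/

theorem coneOf_eq_span {n : ℕ} (s : Finset (V n)) :
    coneOf s = (Submodule.span NNReal (s : Set (V n)) : Set (V n)) := by
  ext x
  simp only [coneOf, Set.mem_ofPred_eq, SetLike.mem_coe]
  constructor
  · rintro ⟨c, hc, rfl⟩
    refine Submodule.sum_mem _ fun v hv => ?_
    exact Submodule.smul_mem _ (⟨c v, hc v⟩ : NNReal) (Submodule.subset_span hv)
  · intro hx
    obtain ⟨f, -, rfl⟩ := Submodule.mem_span_finset.1 hx
    exact ⟨fun v => f v, fun v => (f v).2, rfl⟩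

theorem coneHull_eq_span {n : ℕ} (s : Set (V n)) :
    coneHull s = (Submodule.span NNReal s : Set (V n)) := by
  ext x
  simp only [coneHull, Set.mem_ofPred_eq, SetLike.mem_coe]
  constructor
  · rintro ⟨t, ht, c, hc, rfl⟩
    refine Submodule.sum_mem _ fun v hv => ?_
    exact Submodule.smul_mem _ (⟨c v, hc v⟩ : NNReal) (Submodule.subset_span (ht hv))
  · intro hx
    obtain ⟨t, hts, hx⟩ := Submodule.mem_span_finite_of_mem_span hx
    have : x ∈ coneOf t := by rw [coneOf_eq_span]; exact hx
    obtain ⟨c, hc, h⟩ := this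
    exact ⟨t, hts, c, hc, h⟩

theorem smul_mem_span {n : ℕ} {S : Set (V n)} {x : V n} {a : ℝ} (ha : 0 ≤ a)
    (hx : x ∈ Submodule.span NNReal S) : a • x ∈ Submodule.span NNReal S :=
  Submodule.smul_mem _ (⟨a, ha⟩ : NNReal) hx

theorem nonneg_on_span {n : ℕ} {S : Set (V n)} {m : V n →ₗ[ℝ] ℝ} (h : ∀ v ∈ S, 0 ≤ m v)
    {x : V n} (hx : x ∈ Submodule.span NNReal S) : 0 ≤ m x := by
  induction hx using Submodule.span_induction with
  | mem x hx => exact h x hx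
  | zero => simp
  | add x y _ _ hx hy => rw [map_add]; exact add_nonneg hx hy
  | smul a x _ hx =>
    have : m (a • x) = (a : ℝ) * m x := m.map_smul (a : ℝ) x
    rw [this]; exact mul_nonneg a.2 hx

theorem eq_zero_of_dimCone_eq {n : ℕ} {σ : Set (V n)} (hdim : dimCone σ = n)
    {m : V n →ₗ[ℝ] ℝ} (h : ∀ x ∈ σ, m x = 0) : m = 0 := by
  have htop : Submodule.span ℝ σ = ⊤ :=
    Submodule.eq_top_of_finrank_eq (by simpa [dimCone] using hdim)
  have : Submodule.span ℝ σ ≤ LinearMap.ker m := Submodule.span_le.2 h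
  rw [htop, top_le_iff] at this
  exact LinearMap.ker_eq_top.1 this

/-! ### Functionals on a cone as sums of facet functionals -/

/-- If the face cut out by `m` has codimension at least two, then `m` is a sum of two nonzero
functionals, nonnegative on the cone, each vanishing on strictly more generators than `m`. -/
theorem exists_split {n : ℕ} (T : Finset (V n)) {σ' : Set (V n)}
    (hT : σ' = Submodule.span NNReal (T : Set (V n))) (hdim : dimCone σ' = n)
    (m : V n →ₗ[ℝ] ℝ) (hm : ∀ x ∈ σ', 0 ≤ m x) (hm0 : m ≠ 0)
    (hnf : ¬ IsFacetOf {x ∈ σ' | m x = 0} σ') :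
    ∃ m₁ m₂ : V n →ₗ[ℝ] ℝ, m = m₁ + m₂ ∧ (∀ x ∈ σ', 0 ≤ m₁ x) ∧ (∀ x ∈ σ', 0 ≤ m₂ x) ∧
      m₁ ≠ 0 ∧ m₂ ≠ 0 ∧ (T.filter (m₁ · ≠ 0)).card < (T.filter (m · ≠ 0)).card ∧
      (T.filter (m₂ · ≠ 0)).card < (T.filter (m · ≠ 0)).card := by
  have hTσ : ∀ w ∈ T, w ∈ σ' := fun w hw => hT ▸ Submodule.subset_span hw
  have hgen : ∀ g : V n →ₗ[ℝ] ℝ, (∀ w ∈ T, 0 ≤ g w) → ∀ x ∈ σ', 0 ≤ g x := by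
    rw [hT]
    exact fun g hg x hx => nonneg_on_span hg hx
  set Z : Set (V n) := {x ∈ σ' | m x = 0} with hZ
  have hle : Submodule.span ℝ Z ≤ LinearMap.ker m := Submodule.span_le.2 fun x hx => hx.2
  have hker : Module.finrank ℝ (LinearMap.ker m) = n - 1 := by
    have h1 := LinearMap.finrank_range_add_finrank_ker m
    have h2 : LinearMap.range m = ⊤ := LinearMap.range_eq_top.2 (LinearMap.surjective hm0)
    rw [h2, finrank_top] at h1
    simp at h1
    omega
  have hlt : Submodule.span ℝ Z < LinearMap.ker m := by
    refine lt_of_le_of_ne hle fun h => hnf ⟨⟨m, hm, rfl⟩, ?_⟩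
    rw [hdim, ← hker, ← h]
    rfl
  obtain ⟨y, hym, hyZ⟩ := SetLike.exists_of_lt hlt
  replace hym : m y = 0 := hym
  obtain ⟨f, hfy, hf⟩ := Submodule.exists_le_ker_of_notMem hyZ
  have hfZ : ∀ w ∈ T, m w = 0 → f w = 0 := fun w hw h =>
    hf (Submodule.subset_span ⟨hTσ w hw, h⟩)
  have hne : (T.filter (m · ≠ 0)).Nonempty := by
    by_contra hemp
    rw [Finset.not_nonempty_iff_eq_empty, Finset.filter_eq_empty_iff] at hemp
    refine hm0 (eq_zero_of_dimCone_eq hdim ?_)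
    intro x hx
    have := hgen (-m) (fun v hv => by simp [not_not.1 (hemp hv)]) x hx
    exact le_antisymm (by simpa using this) (hm x hx)
  obtain ⟨a, ha, hamin⟩ := Finset.exists_min_image _ (fun w => f w / m w) hne
  obtain ⟨b, hb, hbmax⟩ := Finset.exists_max_image _ (fun w => f w / m w) hne
  rw [Finset.mem_filter] at ha hb
  have hpos : ∀ w ∈ T, m w ≠ 0 → 0 < m w := fun w hw h =>
    lt_of_le_of_ne (hm w (hTσ w hw)) (Ne.symm h)
  -- With `c`, `C` the extreme values of `f / m` on the generators off the face, both `f - c • m` and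
  -- `C • m - f` are nonnegative, and their sum is a multiple of `m`.
  set c := f a / m a with hc
  set C := f b / m b with hC
  have hca : f a = c * m a := by rw [hc]; field_simp [ha.2]
  have hCb : f b = C * m b := by rw [hC]; field_simp [hb.2]
  have h1 : ∀ x ∈ σ', 0 ≤ (f - c • m) x := by
    refine hgen _ fun w hw => ?_
    by_cases h : m w = 0
    · simp [h, hfZ w hw h]
    · have := hamin w (Finset.mem_filter.2 ⟨hw, h⟩)
      rw [le_div_iff₀ (hpos w hw h)] at this
      simpa using this
  have h2 : ∀ x ∈ σ', 0 ≤ (C • m - f) x := by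
    refine hgen _ fun w hw => ?_
    by_cases h : m w = 0
    · simp [h, hfZ w hw h]
    · have := hbmax w (Finset.mem_filter.2 ⟨hw, h⟩)
      rw [div_le_iff₀ (hpos w hw h)] at this
      simpa using this
  have hcC : c < C := by
    refine lt_of_le_of_ne (hamin b (Finset.mem_filter.2 hb)) fun h => ?_
    have h0 : f - c • m = 0 := by
      refine eq_zero_of_dimCone_eq hdim fun x hx => le_antisymm ?_ (h1 x hx)
      have := h2 x hx
      rw [← h] at this
      simp at this ⊢
      exact this
    have := LinearMap.congr_fun h0 y
    simp [hym, hfy] at this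
  have hk : (0 : ℝ) < (C - c)⁻¹ := inv_pos.2 (sub_pos.2 hcC)
  refine ⟨(C - c)⁻¹ • (f - c • m), (C - c)⁻¹ • (C • m - f), ?_, ?_, ?_, ?_, ?_, ?_, ?_⟩
  · rw [← smul_add]
    have : f - c • m + (C • m - f) = (C - c) • m := by module
    rw [this, smul_smul, inv_mul_cancel₀ (sub_pos.2 hcC).ne', one_smul]
  · exact fun x hx => mul_nonneg hk.le (h1 x hx)
  · exact fun x hx => mul_nonneg hk.le (h2 x hx)
  · intro h
    have := LinearMap.congr_fun h y
    simp [hym, hfy, (sub_pos.2 hcC).ne'] at this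
  · intro h
    have := LinearMap.congr_fun h y
    simp [hym, hfy, (sub_pos.2 hcC).ne'] at this
  · refine Finset.card_lt_card (Finset.ssubset_iff_subset_ne.2 ⟨fun w hw => ?_, fun h => ?_⟩)
    · rw [Finset.mem_filter] at hw ⊢
      refine ⟨hw.1, fun h => hw.2 ?_⟩
      simp [h, hfZ w hw.1 h]
    · have : a ∈ T.filter (m · ≠ 0) := Finset.mem_filter.2 ha
      rw [← h, Finset.mem_filter] at this
      exact this.2 (by simp [hca])
  · refine Finset.card_lt_card (Finset.ssubset_iff_subset_ne.2 ⟨fun w hw => ?_, fun h => ?_⟩)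
    · rw [Finset.mem_filter] at hw ⊢
      refine ⟨hw.1, fun h => hw.2 ?_⟩
      simp [h, hfZ w hw.1 h]
    · have : b ∈ T.filter (m · ≠ 0) := Finset.mem_filter.2 hb
      rw [← h, Finset.mem_filter] at this
      exact this.2 (by simp [hCb])

/-- Every nonzero functional that is nonnegative on a full-dimensional polyhedral cone is a sum of
functionals cutting out facets, phrased as an induction principle. -/
theorem facet_induction {n : ℕ} (T : Finset (V n)) {σ' : Set (V n)}
    (hT : σ' = Submodule.span NNReal (T : Set (V n))) (hdim : dimCone σ' = n)
    (P : (V n →ₗ[ℝ] ℝ) → Prop)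
    (facet : ∀ m, (∀ x ∈ σ', 0 ≤ m x) → IsFacetOf {x ∈ σ' | m x = 0} σ' → P m)
    (sum : ∀ m₁ m₂, (∀ x ∈ σ', 0 ≤ m₁ x) → (∀ x ∈ σ', 0 ≤ m₂ x) → P m₁ → P m₂ → P (m₁ + m₂))
    (m : V n →ₗ[ℝ] ℝ) (hm : ∀ x ∈ σ', 0 ≤ m x) (hm0 : m ≠ 0) : P m := by
  induction hN : (T.filter (m · ≠ 0)).card using Nat.strong_induction_on generalizing m with
  | _ N ih =>
    by_cases hf : IsFacetOf {x ∈ σ' | m x = 0} σ'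
    · exact facet m hm hf
    · obtain ⟨m₁, m₂, rfl, h1, h2, h10, h20, hc1, hc2⟩ := exists_split T hT hdim m hm hm0 hf
      exact sum m₁ m₂ h1 h2 (ih _ (hN ▸ hc1) m₁ h1 h10 rfl) (ih _ (hN ▸ hc2) m₂ h2 h20 rfl)

theorem zeroSet_add {n : ℕ} {σ' : Set (V n)} {m₁ m₂ : V n →ₗ[ℝ] ℝ}
    (h1 : ∀ x ∈ σ', 0 ≤ m₁ x) (h2 : ∀ x ∈ σ', 0 ≤ m₂ x) :
    {x ∈ σ' | (m₁ + m₂) x = 0} = {x ∈ σ' | m₁ x = 0} ∩ {x ∈ σ' | m₂ x = 0} := by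
  ext x
  simp only [Set.mem_ofPred_eq, Set.mem_inter_iff, LinearMap.add_apply]
  constructor
  · rintro ⟨hx, h⟩
    have := h1 x hx
    have := h2 x hx
    exact ⟨⟨hx, by linarith⟩, hx, by linarith⟩
  · rintro ⟨⟨hx, h⟩, -, h'⟩
    exact ⟨hx, by rw [h, h', add_zero]⟩

/-! ### Faces of a pyramid -/

/-- The three assertions, for a cone `σ = σ' + ℝ≥0 · v` presented by generators. -/
theorem faces_of_pyramid {n : ℕ} (T : Finset (V n)) {σ σ' η : Set (V n)} (v : V n)
    (hT : σ' = Submodule.span NNReal (T : Set (V n))) (hσ : σ = σ' + rayGen v)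
    (hdim : dimCone σ' = n) (hη : IsFacetOf η σ') (hbeyond : Beyond σ' η v)
    (hbeneath : ∀ η', IsFacetOf η' σ' → η' ≠ η → Beneath σ' η' v) :
    (∀ κ, IsFaceOf κ σ' → κ ≠ σ' → κ ≠ η → IsFaceOf κ σ) ∧
    (∀ κ, IsFaceOf κ η → κ ≠ η → IsFaceOf (κ + rayGen v) σ ∧ κ + rayGen v ≠ σ) ∧
    (∀ φ, IsFaceOf φ σ → φ ≠ σ →
      (IsFaceOf φ σ' ∧ φ ≠ σ' ∧ φ ≠ η) ∨ ∃ κ, IsFaceOf κ η ∧ κ ≠ η ∧ φ = κ + rayGen v) := by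
  have hv : v ∈ rayGen v := ⟨1, zero_le_one, by simp⟩
  have h0v : (0 : V n) ∈ rayGen v := ⟨0, le_rfl, by simp⟩
  have h0σ' : (0 : V n) ∈ σ' := by rw [hT]; exact Submodule.zero_mem _
  have hσ'σ : σ' ⊆ σ := fun x hx => hσ ▸ ⟨x, hx, 0, h0v, add_zero x⟩
  have hvσ : v ∈ σ := hσ ▸ ⟨0, h0σ', v, hv, zero_add v⟩
  have hTσ : ∀ w ∈ T, w ∈ σ' := fun w hw => hT ▸ Submodule.subset_span hw
  -- How faces of `σ` and of `σ'` cut out by the same functional are related.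
  have hnonneg : ∀ m : V n →ₗ[ℝ] ℝ, (∀ x ∈ σ', 0 ≤ m x) → 0 ≤ m v → ∀ x ∈ σ, 0 ≤ m x := by
    rw [hσ]
    rintro m hm hmv _ ⟨x, hx, _, ⟨c, hc, rfl⟩, rfl⟩
    simpa using add_nonneg (hm x hx) (mul_nonneg hc hmv)
  have hzero_pos : ∀ m : V n →ₗ[ℝ] ℝ, (∀ x ∈ σ', 0 ≤ m x) → 0 < m v →
      {x ∈ σ | m x = 0} = {x ∈ σ' | m x = 0} := by
    intro m hm hmv
    refine Set.Subset.antisymm ?_ fun x hx => ⟨hσ'σ hx.1, hx.2⟩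
    rw [hσ]
    rintro _ ⟨⟨x, hx, _, ⟨c, hc, rfl⟩, rfl⟩, h⟩
    have h1 := hm x hx
    have h2 := mul_nonneg hc hmv.le
    simp only [map_add, map_smul, smul_eq_mul] at h
    have h3 : c * m v = 0 := by linarith
    have h4 : c = 0 := (mul_eq_zero.1 h3).resolve_right hmv.ne'
    subst h4
    simp at h
    simpa [h] using hx
  have hzero_zero : ∀ m : V n →ₗ[ℝ] ℝ, m v = 0 →
      {x ∈ σ | m x = 0} = {x ∈ σ' | m x = 0} + rayGen v := by
    intro m hmv
    rw [hσ]
    ext z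
    constructor
    · rintro ⟨⟨x, hx, _, ⟨c, hc, rfl⟩, rfl⟩, h⟩
      exact ⟨x, ⟨hx, by simpa [hmv] using h⟩, _, ⟨c, hc, rfl⟩, rfl⟩
    · rintro ⟨x, ⟨hx, h⟩, _, ⟨c, hc, rfl⟩, rfl⟩
      exact ⟨⟨x, hx, _, ⟨c, hc, rfl⟩, rfl⟩, by simp [hmv, h]⟩
  -- A proper face other than `η` lies in a facet other than `η`, so adding a large multiple of
  -- that facet's functional makes the functional positive at `v`.
  have hA : ∀ m : V n →ₗ[ℝ] ℝ, (∀ x ∈ σ', 0 ≤ m x) → m ≠ 0 → {x ∈ σ' | m x = 0} ≠ η →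
      ∃ m' : V n →ₗ[ℝ] ℝ, (∀ x ∈ σ', 0 ≤ m' x) ∧
        {x ∈ σ' | m' x = 0} = {x ∈ σ' | m x = 0} ∧ 0 < m' v := by
    intro m hm hm0 hne
    have key : {x ∈ σ' | m x = 0} ≠ η → ∃ f : V n →ₗ[ℝ] ℝ, (∀ x ∈ σ', 0 ≤ f x) ∧
        {x ∈ σ' | m x = 0} ⊆ {x ∈ σ' | f x = 0} ∧ 0 < f v := by
      refine facet_induction T hT hdim (fun m => {x ∈ σ' | m x = 0} ≠ η →
        ∃ f : V n →ₗ[ℝ] ℝ, (∀ x ∈ σ', 0 ≤ f x) ∧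
          {x ∈ σ' | m x = 0} ⊆ {x ∈ σ' | f x = 0} ∧ 0 < f v) ?_ ?_ m hm hm0
      · intro m hm hf hne
        exact ⟨m, hm, subset_rfl, hbeneath _ hf hne m hm rfl⟩
      · intro m₁ m₂ h1 h2 ih1 ih2 hne
        rw [zeroSet_add h1 h2] at hne ⊢
        by_cases he : {x ∈ σ' | m₁ x = 0} = η
        · by_cases he' : {x ∈ σ' | m₂ x = 0} = η
          · rw [he, he', Set.inter_self] at hne
            exact absurd rfl hne
          · obtain ⟨f, hf, hs, hp⟩ := ih2 he'
            exact ⟨f, hf, Set.inter_subset_right.trans hs, hp⟩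
        · obtain ⟨f, hf, hs, hp⟩ := ih1 he
          exact ⟨f, hf, Set.inter_subset_left.trans hs, hp⟩
    obtain ⟨f, hf, hs, hp⟩ := key hne
    set t : ℝ := (|m v| + 1) / f v with ht
    have ht0 : 0 < t := by positivity
    have htf : ∀ x ∈ σ', 0 ≤ (t • f) x := fun x hx => mul_nonneg ht0.le (hf x hx)
    refine ⟨m + t • f, fun x hx => add_nonneg (hm x hx) (htf x hx), ?_, ?_⟩
    · rw [zeroSet_add hm htf, Set.inter_eq_left]
      exact fun x hx => ⟨hx.1, by simp [(hs hx).2]⟩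
    · have : t * f v = |m v| + 1 := by rw [ht]; field_simp
      have h3 := neg_abs_le (m v)
      simp only [LinearMap.add_apply, LinearMap.smul_apply, smul_eq_mul]
      linarith
  -- If no facet summand of the functional cuts out `η`, then all are positive at `v`.
  have hB : ∀ m : V n →ₗ[ℝ] ℝ, (∀ x ∈ σ', 0 ≤ m x) → m ≠ 0 → ¬ {x ∈ σ' | m x = 0} ⊆ η →
      0 < m v := by
    intro m hm hm0
    refine facet_induction T hT hdim
      (fun m => ¬ {x ∈ σ' | m x = 0} ⊆ η → 0 < m v) ?_ ?_ m hm hm0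
    · intro m hm hf hne
      exact hbeneath _ hf (fun h => hne h.subset) m hm rfl
    · intro m₁ m₂ h1 h2 ih1 ih2 hne
      rw [zeroSet_add h1 h2] at hne
      exact add_pos (ih1 fun h => hne (Set.inter_subset_left.trans h))
        (ih2 fun h => hne (Set.inter_subset_right.trans h))
  obtain ⟨⟨h, hh, hηh⟩, -⟩ := hη
  have hhv : h v < 0 := hbeyond h hh hηh
  have hησ' : η ⊆ σ' := by rw [hηh]; exact fun x hx => hx.1
  refine ⟨?_, ?_, ?_⟩
  · rintro κ ⟨m, hm, rfl⟩ hκσ hκη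
    have hm0 : m ≠ 0 := by
      rintro rfl
      simp at hκσ
    obtain ⟨m', hm', hz, hp⟩ := hA m hm hm0 hκη
    exact ⟨m', hnonneg m' hm' hp.le, by rw [hzero_pos m' hm' hp, hz]⟩
  · rintro κ ⟨m, hm, rfl⟩ hκη
    -- A face of `η` is a face of `σ'`: add a large multiple of the functional of `η`.
    obtain ⟨t, ht⟩ : ∃ t : ℝ, ∀ w ∈ T, h w ≠ 0 → -m w < t * h w := by
      obtain ⟨t, ht⟩ := (T.image fun w => -m w / h w).exists_le
      refine ⟨t + 1, fun w hw hne => ?_⟩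
      have hpos : 0 < h w := lt_of_le_of_ne (hh w (hTσ w hw)) (Ne.symm hne)
      have := ht _ (Finset.mem_image_of_mem _ hw)
      rw [div_le_iff₀ hpos] at this
      linarith
    have hTnn : ∀ w ∈ T, 0 ≤ (m + t • h) w := by
      intro w hw
      simp only [LinearMap.add_apply, LinearMap.smul_apply, smul_eq_mul]
      by_cases hw0 : h w = 0
      · rw [hw0, mul_zero, add_zero]
        exact hm w (by rw [hηh]; exact ⟨hTσ w hw, hw0⟩)
      · linarith [ht w hw hw0]
    have hnn : ∀ x ∈ σ', 0 ≤ (m + t • h) x := by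
      rw [hT]
      exact fun x hx => nonneg_on_span hTnn hx
    have hnn' : ∀ x ∈ σ', 0 ≤ (m + (t + 1) • h) x := by
      intro x hx
      have h1 := hnn x hx
      have h2 := hh x hx
      simp only [LinearMap.add_apply, LinearMap.smul_apply, smul_eq_mul] at h1 ⊢
      linarith
    have hz' : {x ∈ σ' | (m + (t + 1) • h) x = 0} = {x ∈ η | m x = 0} := by
      have : m + (t + 1) • h = (m + t • h) + h := by module
      rw [this, zeroSet_add hnn hh, ← hηh]
      ext x
      constructor
      · rintro ⟨⟨-, h1⟩, h2⟩
        have h3 : h x = 0 := by rw [hηh] at h2; exact h2.2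
        exact ⟨h2, by simpa [h3] using h1⟩
      · rintro ⟨h2, h1⟩
        have h3 : h x = 0 := by rw [hηh] at h2; exact h2.2
        exact ⟨⟨hησ' h2, by simp [h3, h1]⟩, h2⟩
    have hne0 : m + (t + 1) • h ≠ 0 := by
      intro h0
      rw [h0] at hz'
      refine hκη (Set.Subset.antisymm (fun x hx => hx.1) ?_)
      rw [← hz']
      exact fun x hx => ⟨hησ' hx, rfl⟩
    obtain ⟨p, hp, hpz, hpv⟩ := hA _ hnn' hne0 (by rw [hz']; exact hκη)
    rw [hz'] at hpz
    -- Tilt `p` until its kernel contains `v`.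
    set s : ℝ := p v / (-h v) with hs
    have hs0 : 0 < s := div_pos hpv (neg_pos.2 hhv)
    have hsh : ∀ x ∈ σ', 0 ≤ (s • h) x := fun x hx => mul_nonneg hs0.le (hh x hx)
    have hqv : (p + s • h) v = 0 := by
      have : s * -h v = p v := div_mul_cancel₀ _ (neg_pos.2 hhv).ne'
      simp only [LinearMap.add_apply, LinearMap.smul_apply, smul_eq_mul]
      linarith
    have hqnn : ∀ x ∈ σ', 0 ≤ (p + s • h) x := fun x hx => add_nonneg (hp x hx) (hsh x hx)
    have hqz : {x ∈ σ' | (p + s • h) x = 0} = {x ∈ η | m x = 0} := by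
      rw [zeroSet_add hp hsh, hpz, Set.inter_eq_left]
      intro x hx
      have h3 : h x = 0 := by have := hx.1; rw [hηh] at this; exact this.2
      exact ⟨hησ' hx.1, by simp [h3]⟩
    have hface := hzero_zero _ hqv
    rw [hqz] at hface
    refine ⟨⟨p + s • h, hnonneg _ hqnn hqv.ge, hface.symm⟩, fun heq => hκη ?_⟩
    rw [← hface] at heq
    refine Set.Subset.antisymm (fun x hx => hx.1) ?_
    rw [← hqz]
    intro x hx
    have hxσ := hσ'σ (hησ' hx)
    rw [← heq] at hxσ
    exact ⟨hησ' hx, hxσ.2⟩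
  · rintro φ ⟨m, hm, rfl⟩ hφ
    have hmσ' : ∀ x ∈ σ', 0 ≤ m x := fun x hx => hm x (hσ'σ hx)
    have hm0 : m ≠ 0 := by
      rintro rfl
      simp at hφ
    have hne : {x ∈ σ' | m x = 0} ≠ η := fun he =>
      (hbeyond m hmσ' he.symm).not_ge (hm v hvσ)
    rcases (hm v hvσ).eq_or_lt with hmv | hmv
    · right
      have hsub : {x ∈ σ' | m x = 0} ⊆ η := by
        by_contra hns
        exact (hB m hmσ' hm0 hns).ne hmv
      refine ⟨{x ∈ σ' | m x = 0}, ⟨m, fun x hx => hmσ' x (hησ' hx), ?_⟩, hne,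
        hzero_zero m hmv.symm⟩
      exact Set.Subset.antisymm (fun x hx => ⟨hsub hx, hx.2⟩) fun x hx => ⟨hησ' hx.1, hx.2⟩
    · left
      rw [hzero_pos m hmσ' hmv]
      refine ⟨⟨m, hmσ', rfl⟩, fun he => hm0 (eq_zero_of_dimCone_eq hdim fun x hx => ?_), hne⟩
      rw [← he] at hx
      exact hx.2

/-! ### Rays generate a strictly convex cone -/

/-- Each element `v` of an irredundant generating set of a strictly convex cone is exposed: the
convex hull of the other generators misses the line `ℝ · v`, so a functional separates them. -/
theorem exists_exposing {n : ℕ} (s : Finset (V n))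
    (hconv : IsStrictlyConvexCone (Submodule.span NNReal (s : Set (V n)) : Set (V n)))
    {v : V n} (hvs : v ∈ s) (hv : v ∉ Submodule.span NNReal (↑(s.erase v) : Set (V n)))
    (h0 : (0 : V n) ∉ s) :
    ∃ m : V n →ₗ[ℝ] ℝ, m v = 0 ∧ ∀ w ∈ s.erase v, 0 < m w := by
  classical
  set K := convexHull ℝ (↑(s.erase v) : Set (V n)) with hK
  set L : Submodule ℝ (V n) := Submodule.span ℝ {v}
  have hdisj : Disjoint K (L : Set (V n)) := by
    rw [Set.disjoint_left]
    intro x hxK hxL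
    obtain ⟨a, rfl⟩ := Submodule.mem_span_singleton.1 hxL
    rw [hK, Finset.mem_convexHull'] at hxK
    obtain ⟨c, hc, hc1, hcx⟩ := hxK
    have hmem : ∀ u ⊆ s.erase v, ∑ y ∈ u, c y • y ∈
        Submodule.span NNReal (↑(s.erase v) : Set (V n)) := fun u hu =>
      Submodule.sum_mem _ fun y hy => smul_mem_span (hc y (hu hy)) (Submodule.subset_span (hu hy))
    have hsub : Submodule.span NNReal (↑(s.erase v) : Set (V n)) ≤
        Submodule.span NNReal (s : Set (V n)) :=
      Submodule.span_mono (by exact_mod_cast s.erase_subset v)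
    rcases lt_or_ge 0 a with ha | ha
    · apply hv
      have := smul_mem_span (inv_pos.2 ha).le (hmem _ subset_rfl)
      rwa [hcx, smul_smul, inv_mul_cancel₀ ha.ne', one_smul] at this
    · obtain ⟨w, hw, hcw⟩ : ∃ w ∈ s.erase v, c w ≠ 0 :=
        Finset.exists_ne_zero_of_sum_ne_zero (by rw [hc1]; exact one_ne_zero)
      have hsplit := Finset.add_sum_erase (s.erase v) (fun y => c y • y) hw
      simp only [hcx] at hsplit
      have hneg : -(c w • w) ∈ Submodule.span NNReal (s : Set (V n)) := by
        have : -(c w • w) = ∑ y ∈ (s.erase v).erase w, c y • y + (-a) • v := by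
          rw [neg_smul, ← hsplit]; abel
        rw [this]
        exact Submodule.add_mem _ (hsub (hmem _ (Finset.erase_subset _ _)))
          (smul_mem_span (neg_nonneg.2 ha) (Submodule.subset_span hvs))
      have hws := Finset.mem_of_mem_erase hw
      have hin : c w • w ∈ (Submodule.span NNReal (s : Set (V n)) : Set (V n)) ∩
          -(Submodule.span NNReal (s : Set (V n)) : Set (V n)) :=
        ⟨smul_mem_span (hc w hw) (Submodule.subset_span hws), hneg⟩
      rw [hconv] at hin
      rcases smul_eq_zero.1 hin with h | h
      · exact hcw h
      · exact h0 (h ▸ hws)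
  obtain ⟨f, u, u', hf, huu, hf'⟩ := geometric_hahn_banach_compact_closed (convex_convexHull ℝ _)
    ((s.erase v).finite_toSet.isCompact_convexHull ℝ) L.convex L.closed_of_finiteDimensional hdisj
  have hu0 : u' < 0 := by simpa using hf' 0 L.zero_mem
  have hfv : f v = 0 := by
    by_contra hne
    have := hf' ((u' / f v) • v) (L.smul_mem _ (Submodule.mem_span_singleton_self v))
    rw [map_smul, smul_eq_mul, div_mul_cancel₀ _ hne] at this
    exact lt_irrefl _ this
  refine ⟨-(f : V n →ₗ[ℝ] ℝ), by simp [hfv], fun w hw => ?_⟩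
  have := hf w (subset_convexHull ℝ _ hw)
  simp only [LinearMap.neg_apply, ContinuousLinearMap.coe_coe]
  linarith

/-- A strictly convex polyhedral cone is generated by a set with exactly one nonzero vector on each
of its rays. -/
theorem exists_ray_generators {n : ℕ} {σ : Set (V n)} (hpoly : IsPolyhedralCone σ)
    (hconv : IsStrictlyConvexCone σ) :
    ∃ s : Finset (V n), σ = Submodule.span NNReal (s : Set (V n)) ∧
      raysOf σ = rayGen '' s ∧ Set.InjOn rayGen (s : Set (V n)) ∧ (0 : V n) ∉ s := by
  classical
  obtain ⟨s, hs, hmin⟩ := WellFounded.has_min (measure (Finset.card (α := V n))).wf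
    {s | σ = coneOf s} hpoly
  have hs' : σ = Submodule.span NNReal (s : Set (V n)) := by rw [← coneOf_eq_span]; exact hs
  have hirr : ∀ v ∈ s, v ∉ Submodule.span NNReal (↑(s.erase v) : Set (V n)) := by
    intro v hv hmem
    refine hmin (s.erase v) ?_ (Finset.card_erase_lt_of_mem hv)
    change σ = coneOf _
    rw [coneOf_eq_span, hs', ← Submodule.span_insert_eq_span hmem, Finset.coe_erase,
      Set.insert_sdiff_singleton, Set.insert_eq_of_mem (by exact_mod_cast hv)]
  have h0 : (0 : V n) ∉ s := fun h => hirr 0 h (Submodule.zero_mem _)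
  have hsσ : ∀ v ∈ s, v ∈ σ := fun v hv => hs' ▸ Submodule.subset_span hv
  have hexp : ∀ v ∈ s, ∃ m : V n →ₗ[ℝ] ℝ, m v = 0 ∧ ∀ w ∈ s.erase v, 0 < m w :=
    fun v hv => exists_exposing s (hs' ▸ hconv) hv (hirr v hv) h0
  have hself : ∀ v : V n, v ∈ rayGen v := fun v => ⟨1, zero_le_one, by simp⟩
  refine ⟨s, hs', ?_, ?_, h0⟩
  · ext ρ
    constructor
    · rintro ⟨⟨m, hm, rfl⟩, hd⟩
      -- A nonzero point of the ray has a generator with positive coefficient, which lies on it.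
      obtain ⟨v, hv, hmv⟩ : ∃ v ∈ s, m v = 0 := by
        by_contra! hno
        have hsub : {x ∈ σ | m x = 0} ⊆ {0} := by
          rintro x ⟨hx, hmx⟩
          rw [hs] at hx
          obtain ⟨c, hc, rfl⟩ := hx
          rw [map_sum, Finset.sum_eq_zero_iff_of_nonneg] at hmx
          · refine Finset.sum_eq_zero fun v hv => ?_
            have := hmx v hv
            rw [map_smul, smul_eq_mul] at this
            rw [(mul_eq_zero.1 this).resolve_right (hno v hv), zero_smul]
          · intro v hv
            rw [map_smul, smul_eq_mul]
            exact mul_nonneg (hc v) (hm v (hsσ v hv))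
        have hbot : Submodule.span ℝ {x ∈ σ | m x = 0} = ⊥ :=
          Submodule.span_eq_bot.2 fun x hx => hsub hx
        rw [dimCone, hbot, finrank_bot] at hd
        exact zero_ne_one hd
      have hv0 : v ≠ 0 := fun h => h0 (h ▸ hv)
      refine ⟨v, hv, Set.Subset.antisymm ?_ ?_⟩
      · rintro _ ⟨c, hc, rfl⟩
        refine ⟨?_, by simp [hmv]⟩
        rw [hs']
        exact smul_mem_span hc (Submodule.subset_span hv)
      · rintro x hx
        have hvmem : v ∈ Submodule.span ℝ {x ∈ σ | m x = 0} :=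
          Submodule.subset_span ⟨hsσ v hv, hmv⟩
        obtain ⟨a, ha⟩ := (finrank_eq_one_iff_of_nonzero'
          (⟨v, hvmem⟩ : Submodule.span ℝ {x ∈ σ | m x = 0})
          (by simpa [Subtype.ext_iff] using hv0)).1 hd ⟨x, Submodule.subset_span hx⟩
        have ha' : a • v = x := congrArg Subtype.val ha
        refine ⟨a, ?_, ha'.symm⟩
        by_contra! hneg
        have hin : v ∈ σ ∩ -σ := by
          refine ⟨hsσ v hv, ?_⟩
          have hxs : x ∈ Submodule.span NNReal (s : Set (V n)) := by
            have := hx.1; rw [hs'] at this; exact this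
          have := smul_mem_span (neg_pos.2 (inv_lt_zero.2 hneg)).le hxs
          rw [← ha', smul_smul, neg_mul, inv_mul_cancel₀ hneg.ne, neg_smul, one_smul] at this
          change -v ∈ σ
          rw [hs']
          exact this
        rw [hconv] at hin
        exact hv0 hin
    · rintro ⟨v, hv, rfl⟩
      replace hv : v ∈ s := hv
      have hv0 : v ≠ 0 := fun h => h0 (h ▸ hv)
      obtain ⟨m, hmv, hmw⟩ := hexp v hv
      have hnn : ∀ w ∈ s, 0 ≤ m w := by
        intro w hw
        by_cases h : w = v
        · rw [h, hmv]
        · exact (hmw w (Finset.mem_erase.2 ⟨h, hw⟩)).le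
      refine ⟨⟨m, ?_, Set.Subset.antisymm ?_ ?_⟩, ?_⟩
      · rw [hs']
        exact fun x hx => nonneg_on_span hnn hx
      · rintro _ ⟨c, hc, rfl⟩
        refine ⟨?_, by simp [hmv]⟩
        rw [hs']
        exact smul_mem_span hc (Submodule.subset_span hv)
      · rintro x ⟨hx, hmx⟩
        rw [hs] at hx
        obtain ⟨c, hc, rfl⟩ := hx
        refine ⟨c v, hc v, Finset.sum_eq_single_of_mem v hv fun w hw hwv => ?_⟩
        rw [map_sum, Finset.sum_eq_zero_iff_of_nonneg] at hmx
        · have := hmx w hw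
          rw [map_smul, smul_eq_mul] at this
          rw [(mul_eq_zero.1 this).resolve_right (hmw w (Finset.mem_erase.2 ⟨hwv, hw⟩)).ne',
            zero_smul]
        · intro w hw
          rw [map_smul, smul_eq_mul]
          exact mul_nonneg (hc w) (hnn w hw)
      · have : Submodule.span ℝ (rayGen v) = Submodule.span ℝ {v} := by
          refine le_antisymm (Submodule.span_le.2 ?_) (Submodule.span_mono (by simpa using hself v))
          rintro _ ⟨c, -, rfl⟩
          exact Submodule.smul_mem _ _ (Submodule.mem_span_singleton_self v)
        rw [dimCone, this, finrank_span_singleton hv0]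
  · intro v hv w hw heq
    obtain ⟨m, hmv, hmw⟩ := hexp v hv
    by_contra hne
    obtain ⟨c, -, hc⟩ : w ∈ rayGen v := by rw [show rayGen v = rayGen w from heq]; exact hself w
    have := hmw w (Finset.mem_erase.2 ⟨Ne.symm hne, hw⟩)
    rw [hc, map_smul, hmv, smul_zero] at this
    exact lt_irrefl _ this

/-!
STATEMENT 6: With `σ`, `ρ`, `σ'`, `η` as in the pyramidal-extension situation
with `dim σ' = n`: every proper face of `σ'` other than `η` is a face of `σ`;
for every proper face `τ` of `η`, the cone `τ + ρ` is a proper face of `σ`; and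
every proper face of `σ` is of one of these two forms.
-/

theorem stmt_6 {n : ℕ} (σ ρ σ' η : Set (V n))
    (hpoly : IsPolyhedralCone σ) (hconv : IsStrictlyConvexCone σ)
    (hdim : dimCone σ = n)
    (hρ : ρ ∈ raysOf σ)
    (hσ' : σ' = primeCone σ ρ) (hdim' : dimCone σ' = n)
    (hη : IsFacetOf η σ')
    (hbeyond : ∀ x ∈ ρ, x ≠ 0 → Beyond σ' η x)
    (hbeneath : ∀ η', IsFacetOf η' σ' → η' ≠ η → ∀ x ∈ ρ, x ≠ 0 → Beneath σ' η' x) :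
    (∀ κ, IsFaceOf κ σ' → κ ≠ σ' → κ ≠ η → IsFaceOf κ σ) ∧
    (∀ κ, IsFaceOf κ η → κ ≠ η → IsFaceOf (κ + ρ) σ ∧ κ + ρ ≠ σ) ∧
    (∀ φ, IsFaceOf φ σ → φ ≠ σ →
      (IsFaceOf φ σ' ∧ φ ≠ σ' ∧ φ ≠ η) ∨ ∃ κ, IsFaceOf κ η ∧ κ ≠ η ∧ φ = κ + ρ) := by

  classical
  obtain ⟨s, hs, hrays, hinj, h0⟩ := exists_ray_generators hpoly hconv
  obtain ⟨v, hv, rfl⟩ : ∃ v ∈ s, rayGen v = ρ := by rw [hrays] at hρ; exact hρ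
  have hv0 : v ≠ 0 := fun h => h0 (h ▸ hv)
  have hself : ∀ w : V n, w ∈ rayGen w := fun w => ⟨1, zero_le_one, by simp⟩
  have hT : σ' = Submodule.span NNReal (↑(s.erase v) : Set (V n)) := by
    rw [hσ', primeCone, coneHull_eq_span]
    congr 1
    refine le_antisymm (Submodule.span_le.2 ?_) (Submodule.span_mono ?_)
    · intro x hx
      simp only [Set.mem_iUnion, exists_prop] at hx
      obtain ⟨ρ', ⟨hρ', hne⟩, hx⟩ := hx
      rw [hrays] at hρ'
      obtain ⟨w, hw, rfl⟩ := hρ'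
      obtain ⟨c, hc, rfl⟩ := hx
      refine smul_mem_span hc (Submodule.subset_span ?_)
      exact Finset.mem_coe.2 (Finset.mem_erase.2 ⟨fun h => hne (by rw [h]; rfl), hw⟩)
    · intro w hw
      obtain ⟨hwv, hws⟩ := Finset.mem_erase.1 (Finset.mem_coe.1 hw)
      simp only [Set.mem_iUnion, exists_prop]
      refine ⟨rayGen w, ⟨?_, fun h => hwv (hinj hws hv h)⟩, hself w⟩
      rw [hrays]
      exact ⟨w, hws, rfl⟩
  have hsum : σ = σ' + rayGen v := by
    ext x
    rw [hs, hT, ← Finset.insert_erase hv, Finset.coe_insert, SetLike.mem_coe,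
      Submodule.mem_span_insert, Finset.erase_insert (Finset.notMem_erase v s)]
    constructor
    · rintro ⟨a, z, hz, rfl⟩
      exact ⟨z, hz, a • v, ⟨a, a.2, rfl⟩, add_comm _ _⟩
    · rintro ⟨z, hz, _, ⟨a, ha, rfl⟩, rfl⟩
      exact ⟨⟨a, ha⟩, z, hz, add_comm _ _⟩
  exact faces_of_pyramid (s.erase v) v hT hsum hdim' hη (hbeyond v (hself v) hv0)
    fun η' h1 h2 => hbeneath η' h1 h2 v (hself v) hv0
end

section
/- Let σ ⊆ ℝⁿ be an n-dimensional strictly convex polyhedral cone, ρ ∈ σ(1) a ray of σ, and suppose σ is a pyramidal extension of σ' by ρ with dim σ' = n, with distinguished facet η of σ' and σ'' = η + ρ. Then σ' ∩ σ'' = η, σ' ∪ σ'' = σ, and the collection consisting of all faces of σ' together with all faces of σ'' is a fan in ℝⁿ. -/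
/-!
Write `ρ = ℝ≥0 v` and let `m` be a functional exposing the facet `η` of `σ'`, so `m v < 0`.

A strictly convex cone with an irredundant generating set `S` has exactly the rays spanned by the
elements of `S` (`rayGen_mem_raysOf`, `exists_eq_rayGen`): modulo an irredundant generator the
others satisfy no nontrivial nonnegative relation, and Gordan's theorem (`exists_pos_functional`,
from Hahn–Banach) gives the exposing functional. Hence `σ'` is generated by `S \ {v}`
(`primeCone_eq`), and `σ = σ' + ρ`.

A point outside the full-dimensional cone `σ'` violates the inequality of some facet
(`exists_facet`): start with any separating functional and rotate it until its zeros among the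
generators span a hyperplane. For a point `y + c v` with `y ∈ σ'` and `c ≥ 0`, the facets other
than `η` are never violated, because `v` is beneath them. So the half-line from `y` in direction `v`
stays in `σ'` until it meets `ker m`, which it does at a point of `η`, and lies in `η + ρ` from
there on. This gives `σ' ∪ (η + ρ) = σ`. For `y ∈ η`, `m (y + c v) = c m(v)` is negative unless
`c = 0`, so `σ' ∩ (η + ρ) = η`, and `-m` exposes `η` as a face of `η + ρ`.

Two strictly convex polyhedral cones meeting in a common face `η` always give a fan
(`isFan_of_glue`): faces `τ₁`, `τ₂` of the two cones satisfy `τ₁ ∩ τ₂ = (τ₁ ∩ η) ∩ (τ₂ ∩ η)`,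
a face of `η`, hence of both cones by transitivity (`IsFaceOf.trans`), hence of `τ₁` and `τ₂`.
-/

open Pointwise

/-!
STATEMENT 7: With `σ`, `ρ`, `σ'`, `η` as in the pyramidal-extension situation
with `dim σ' = n` and `σ'' = η + ρ`: one has `σ' ∩ σ'' = η`, `σ' ∪ σ'' = σ`,
and the collection of all faces of `σ'` together with all faces of `σ''` is a
fan in `ℝⁿ`.
-/

/-! ### Finitely generated cones -/

lemma coneOf_zero {n : ℕ} (S : Finset (V n)) : (0 : V n) ∈ coneOf S :=
  ⟨0, fun _ => le_rfl, by simp⟩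

lemma coneOf_add {n : ℕ} {S : Finset (V n)} {x y : V n} (hx : x ∈ coneOf S) (hy : y ∈ coneOf S) :
    x + y ∈ coneOf S := by
  obtain ⟨c, hc, rfl⟩ := hx
  obtain ⟨d, hd, rfl⟩ := hy
  refine ⟨c + d, fun v => add_nonneg (hc v) (hd v), ?_⟩
  simp [add_smul, Finset.sum_add_distrib]

lemma coneOf_smul {n : ℕ} {S : Finset (V n)} {x : V n} {a : ℝ} (ha : 0 ≤ a) (hx : x ∈ coneOf S) :
    a • x ∈ coneOf S := by
  obtain ⟨c, hc, rfl⟩ := hx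
  refine ⟨fun v => a * c v, fun v => mul_nonneg ha (hc v), ?_⟩
  simp [mul_smul, Finset.smul_sum]

lemma mem_coneOf {n : ℕ} {S : Finset (V n)} {v : V n} (hv : v ∈ S) : v ∈ coneOf S := by
  classical
  refine ⟨fun w => if w = v then 1 else 0, fun w => by dsimp only; split_ifs <;> norm_num, ?_⟩
  simp [hv]

lemma coneOf_sum {n : ℕ} {S T : Finset (V n)} (c : V n → ℝ) (hc : ∀ v ∈ T, 0 ≤ c v)
    (hT : ∀ v ∈ T, v ∈ coneOf S) : ∑ v ∈ T, c v • v ∈ coneOf S :=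
  Finset.sum_induction _ (· ∈ coneOf S) (fun _ _ => coneOf_add) (coneOf_zero S)
    fun v hv => coneOf_smul (hc v hv) (hT v hv)

lemma coneOf_le {n : ℕ} {S T : Finset (V n)} (hT : ∀ v ∈ T, v ∈ coneOf S) :
    coneOf T ⊆ coneOf S := by
  rintro _ ⟨c, hc, rfl⟩
  exact coneOf_sum c (fun v _ => hc v) hT

lemma coneOf_mono {n : ℕ} {S T : Finset (V n)} (h : T ⊆ S) : coneOf T ⊆ coneOf S :=
  coneOf_le fun _ hv => mem_coneOf (h hv)

lemma nonneg_coneOf {n : ℕ} {S : Finset (V n)} {m : V n →ₗ[ℝ] ℝ} (hm : ∀ v ∈ S, 0 ≤ m v) :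
    ∀ x ∈ coneOf S, 0 ≤ m x := by
  rintro _ ⟨c, hc, rfl⟩
  rw [map_sum]
  exact Finset.sum_nonneg fun v hv => by
    rw [map_smul]; exact mul_nonneg (hc v) (hm v hv)

lemma span_coneOf {n : ℕ} (S : Finset (V n)) :
    Submodule.span ℝ (coneOf S) = Submodule.span ℝ (S : Set (V n)) := by
  apply le_antisymm
  · rw [Submodule.span_le]
    rintro _ ⟨c, -, rfl⟩
    exact Submodule.sum_mem _ fun v hv => Submodule.smul_mem _ _ (Submodule.subset_span hv)
  · exact Submodule.span_mono fun v hv => mem_coneOf hv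

lemma mem_coneOf_erase {n : ℕ} {S : Finset (V n)} {x v : V n} [DecidableEq (V n)] (hv : v ∈ S)
    (hx : x ∈ coneOf S) : ∃ y ∈ coneOf (S.erase v), ∃ a : ℝ, 0 ≤ a ∧ x = y + a • v := by
  obtain ⟨c, hc, rfl⟩ := hx
  exact ⟨_, ⟨c, hc, rfl⟩, c v, hc v, (Finset.sum_erase_add _ _ hv).symm⟩

/-! ### Faces -/

/-- The face cut out by `m` is generated by the generators on which `m` vanishes. -/
lemma face_eq_coneOf {n : ℕ} {S : Finset (V n)} {m : V n →ₗ[ℝ] ℝ} (hm : ∀ v ∈ S, 0 ≤ m v) :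
    {x ∈ coneOf S | m x = 0} = coneOf (S.filter (fun v => m v = 0)) := by
  apply Set.Subset.antisymm
  · rintro _ ⟨⟨c, hc, rfl⟩, h0⟩
    refine ⟨c, hc, ?_⟩
    rw [map_sum, Finset.sum_eq_zero_iff_of_nonneg
      (fun v hv => by rw [map_smul]; exact mul_nonneg (hc v) (hm v hv))] at h0
    rw [Finset.sum_filter]
    refine Finset.sum_congr rfl fun v hv => ?_
    split_ifs with h
    · rfl
    · have := h0 v hv
      rw [map_smul, smul_eq_mul, mul_eq_zero, or_iff_left h] at this
      rw [this, zero_smul]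
  · rintro x hx
    refine ⟨coneOf_mono (Finset.filter_subset _ _) hx, ?_⟩
    obtain ⟨c, hc, rfl⟩ := hx
    rw [map_sum]
    refine Finset.sum_eq_zero fun v hv => ?_
    rw [map_smul, (Finset.mem_filter.1 hv).2, smul_zero]

lemma IsFaceOf.subset {n : ℕ} {τ κ : Set (V n)} (h : IsFaceOf τ κ) : τ ⊆ κ := by
  obtain ⟨m, -, rfl⟩ := h
  exact fun x hx => hx.1

lemma IsFaceOf.eq_coneOf {n : ℕ} {τ : Set (V n)} {S : Finset (V n)} (h : IsFaceOf τ (coneOf S)) :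
    ∃ T ⊆ S, τ = coneOf T := by
  obtain ⟨m, hm, rfl⟩ := h
  exact ⟨_, Finset.filter_subset _ _, face_eq_coneOf fun v hv => hm v (mem_coneOf hv)⟩

lemma finite_faces {n : ℕ} (S : Finset (V n)) : {τ | IsFaceOf τ (coneOf S)}.Finite := by
  refine (S.powerset.finite_toSet.image coneOf).subset fun τ hτ => ?_
  obtain ⟨T, hT, rfl⟩ := IsFaceOf.eq_coneOf hτ
  exact ⟨T, by simpa using hT, rfl⟩

/-- A face of a face is a face: if `m₁` cuts out the first face and `m₂` the second one,
then `N m₁ + m₂` with `N` large cuts out the latter directly. -/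
lemma IsFaceOf.trans {n : ℕ} {θ τ : Set (V n)} {S : Finset (V n)} (h₂ : IsFaceOf θ τ)
    (h₁ : IsFaceOf τ (coneOf S)) : IsFaceOf θ (coneOf S) := by
  obtain ⟨m₁, hm₁, rfl⟩ := h₁
  obtain ⟨m₂, hm₂, rfl⟩ := h₂
  set N : ℝ := ∑ v ∈ S, |m₂ v| / m₁ v with hN
  have hterm : ∀ v ∈ S, 0 ≤ |m₂ v| / m₁ v := fun v hv =>
    div_nonneg (abs_nonneg _) (hm₁ v (mem_coneOf hv))
  have hpos : ∀ x ∈ coneOf S, 0 ≤ (N • m₁ + m₂) x := by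
    refine nonneg_coneOf fun v hv => ?_
    have hv1 := hm₁ v (mem_coneOf hv)
    simp only [LinearMap.add_apply, LinearMap.smul_apply, smul_eq_mul]
    rcases hv1.eq_or_lt with h | h
    · rw [← h, mul_zero, zero_add]
      exact hm₂ v ⟨mem_coneOf hv, h.symm⟩
    · have h1 : |m₂ v| / m₁ v ≤ N := Finset.single_le_sum hterm hv
      rw [div_le_iff₀ h] at h1
      linarith [neg_abs_le (m₂ v)]
  refine ⟨m₁ + (N • m₁ + m₂), fun x hx => add_nonneg (hm₁ x hx) (hpos x hx), ?_⟩
  ext x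
  constructor
  · rintro ⟨⟨hx, h1⟩, h2⟩
    exact ⟨hx, by simp [h1, h2]⟩
  · rintro ⟨hx, h⟩
    have a := hm₁ x hx
    have b := hpos x hx
    simp only [LinearMap.add_apply, LinearMap.smul_apply, smul_eq_mul] at h b
    have h1 : m₁ x = 0 := by linarith
    rw [h1] at h
    exact ⟨⟨hx, h1⟩, by simpa [h1] using h⟩

lemma IsFaceOf.inter {n : ℕ} {τ₁ τ₂ κ : Set (V n)} (h₁ : IsFaceOf τ₁ κ) (h₂ : IsFaceOf τ₂ κ) :
    IsFaceOf (τ₁ ∩ τ₂) κ := by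
  obtain ⟨m₁, hm₁, rfl⟩ := h₁
  obtain ⟨m₂, hm₂, rfl⟩ := h₂
  refine ⟨m₁ + m₂, fun x hx => add_nonneg (hm₁ x hx) (hm₂ x hx), ?_⟩
  ext x
  constructor
  · rintro ⟨⟨hx, h1⟩, -, h2⟩
    exact ⟨hx, by simp [h1, h2]⟩
  · rintro ⟨hx, h⟩
    have a := hm₁ x hx
    have b := hm₂ x hx
    rw [LinearMap.add_apply] at h
    exact ⟨⟨hx, by linarith⟩, hx, by linarith⟩

lemma IsFaceOf.of_subset {n : ℕ} {θ τ κ : Set (V n)} (h : IsFaceOf θ κ) (h₁ : θ ⊆ τ)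
    (h₂ : τ ⊆ κ) : IsFaceOf θ τ := by
  obtain ⟨m, hm, rfl⟩ := h
  refine ⟨m, fun x hx => hm x (h₂ hx), ?_⟩
  ext x
  exact ⟨fun hx => ⟨h₁ hx, hx.2⟩, fun hx => ⟨h₂ hx.1, hx.2⟩⟩

/-! ### Strict convexity and separation -/

lemma IsStrictlyConvexCone.mono {n : ℕ} {τ κ : Set (V n)} (h : IsStrictlyConvexCone κ)
    (hτ : τ ⊆ κ) (h0 : (0 : V n) ∈ τ) : IsStrictlyConvexCone τ := by
  apply Set.Subset.antisymm
  · rintro x ⟨h1, h2⟩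
    rw [← h]
    exact ⟨hτ h1, hτ h2⟩
  · rintro x rfl
    exact ⟨h0, by simpa using h0⟩

lemma eq_zero_of_sum_eq_zero {n : ℕ} {S : Finset (V n)} (hS : IsStrictlyConvexCone (coneOf S))
    {c : V n → ℝ} (hc : ∀ v ∈ S, 0 ≤ c v) (h : ∑ v ∈ S, c v • v = 0) :
    ∀ v ∈ S, v ≠ 0 → c v = 0 := by
  classical
  intro v hv hv0
  have h1 : c v • v ∈ coneOf S := coneOf_smul (hc v hv) (mem_coneOf hv)
  have h2 : -(c v • v) ∈ coneOf S := by
    rw [← Finset.add_sum_erase _ _ hv] at h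
    rw [neg_eq_of_add_eq_zero_right h]
    exact coneOf_sum c (fun w hw => hc w (Finset.mem_of_mem_erase hw))
      fun w hw => mem_coneOf (Finset.mem_of_mem_erase hw)
  have h3 : c v • v ∈ coneOf S ∩ -coneOf S := ⟨h1, h2⟩
  rw [hS] at h3
  exact (smul_eq_zero.1 h3).resolve_right hv0

/-- Gordan's theorem relative to a line: if no nontrivial nonnegative combination of `T` lies on
the line `ℝ v`, some functional vanishes at `v` and is positive on `T`. It comes from strictly
separating the compact convex hull of `T` from the line. -/
lemma exists_pos_functional {n : ℕ} (T : Finset (V n)) (v : V n)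
    (h : ∀ c : V n → ℝ, (∀ w ∈ T, 0 ≤ c w) → ∑ w ∈ T, c w • w ∈ Submodule.span ℝ {v} →
      ∀ w ∈ T, c w = 0) :
    ∃ m : V n →ₗ[ℝ] ℝ, m v = 0 ∧ ∀ w ∈ T, 0 < m w := by
  have hdisj : Disjoint (convexHull ℝ (T : Set (V n))) (Submodule.span ℝ {v} : Set (V n)) := by
    rw [Set.disjoint_left]
    intro x hx hxv
    obtain ⟨w, hw, h1, rfl⟩ := Finset.mem_convexHull'.1 hx
    have := h w hw hxv
    rw [Finset.sum_eq_zero this] at h1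
    exact zero_ne_one h1
  obtain ⟨f, u, b, hf, hub, hb⟩ := geometric_hahn_banach_compact_closed
    (convex_convexHull ℝ (T : Set (V n))) (T.finite_toSet.isCompact_convexHull ℝ)
    (Submodule.span ℝ {v}).convex (Submodule.closed_of_finiteDimensional _) hdisj
  have hb0 : b < 0 := by simpa using hb 0 (Submodule.zero_mem _)
  have hfv : f v = 0 := by
    by_contra hne
    have := hb ((b / f v) • v) (Submodule.smul_mem _ _ (Submodule.mem_span_singleton_self v))
    rw [map_smul, smul_eq_mul, div_mul_cancel₀ _ hne] at this
    exact lt_irrefl _ this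
  refine ⟨-(f : V n →ₗ[ℝ] ℝ), by simp [hfv], fun w hw => ?_⟩
  have := hf w (subset_convexHull ℝ _ hw)
  simp only [LinearMap.neg_apply, ContinuousLinearMap.coe_coe]
  linarith

/-- Farkas' lemma for a strictly convex cone, with a functional positive on the generators. -/
lemma exists_separating {n : ℕ} {S : Finset (V n)} (hS : IsStrictlyConvexCone (coneOf S))
    (h0 : (0 : V n) ∉ S) {x : V n} (hx : x ∉ coneOf S) :
    ∃ m : V n →ₗ[ℝ] ℝ, (∀ w ∈ S, 0 < m w) ∧ m x < 0 := by
  classical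
  obtain ⟨m, -, hm⟩ := exists_pos_functional (insert (-x) S) 0 (by
    intro c hc hsum
    have hsum : ∑ w ∈ insert (-x) S, c w • w = 0 := by simpa using hsum
    have key := fun (h : ∑ v ∈ S, c v • v = 0) (w : V n) (hw : w ∈ S) =>
      eq_zero_of_sum_eq_zero hS (fun v hv => hc v (Finset.mem_insert_of_mem hv)) h w hw
        (fun e => h0 (e ▸ hw))
    by_cases hxS : -x ∈ S
    · rw [Finset.insert_eq_of_mem hxS] at hsum ⊢
      exact key hsum
    · rw [Finset.sum_insert hxS] at hsum
      have hcx : c (-x) = 0 := by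
        by_contra hne
        have hpos : 0 < c (-x) := lt_of_le_of_ne (hc _ (Finset.mem_insert_self _ _)) (Ne.symm hne)
        apply hx
        have : x = (c (-x))⁻¹ • ∑ v ∈ S, c v • v := by
          rw [eq_inv_smul_iff₀ hne]
          rw [smul_neg] at hsum
          exact neg_add_eq_zero.1 hsum
        rw [this]
        exact coneOf_smul (inv_nonneg.2 hpos.le) (coneOf_sum c
          (fun v hv => hc v (Finset.mem_insert_of_mem hv)) fun v hv => mem_coneOf hv)
      rw [hcx, zero_smul, zero_add] at hsum
      intro w hw
      rcases Finset.mem_insert.1 hw with rfl | hw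
      · exact hcx
      · exact key hsum w hw)
  refine ⟨m, fun w hw => hm w (Finset.mem_insert_of_mem hw), ?_⟩
  have := hm _ (Finset.mem_insert_self (-x) S)
  rw [map_neg] at this
  linarith

/-! ### Rays and irredundant generators -/

/-- Every finitely generated cone has a generating set in which no generator is redundant. -/
lemma exists_irredundant {n : ℕ} [DecidableEq (V n)] (S : Finset (V n)) :
    ∃ T : Finset (V n), coneOf T = coneOf S ∧ ∀ v ∈ T, v ∉ coneOf (T.erase v) := by
  induction S using Finset.strongInduction with
  | H S ih =>
    by_cases h : ∀ v ∈ S, v ∉ coneOf (S.erase v)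
    · exact ⟨S, rfl, h⟩
    · push Not at h
      obtain ⟨v, hv, hvS⟩ := h
      obtain ⟨T, hT, hirr⟩ := ih _ (Finset.erase_ssubset hv)
      refine ⟨T, hT.trans ((coneOf_mono (Finset.erase_subset v S)).antisymm
        (coneOf_le fun w hw => ?_)), hirr⟩
      by_cases hwv : w = v
      · rwa [hwv]
      · exact mem_coneOf (Finset.mem_erase.2 ⟨hwv, hw⟩)

lemma rayGen_eq_coneOf {n : ℕ} (v : V n) : rayGen v = coneOf {v} := by
  ext x
  constructor
  · rintro ⟨a, ha, rfl⟩
    exact coneOf_smul ha (mem_coneOf (Finset.mem_singleton_self v))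
  · rintro ⟨c, hc, rfl⟩
    exact ⟨c v, hc v, by simp⟩

section Irredundant

variable {n : ℕ} [DecidableEq (V n)] {S : Finset (V n)}

lemma zero_notMem_of_irredundant (hirr : ∀ v ∈ S, v ∉ coneOf (S.erase v)) : (0 : V n) ∉ S :=
  fun h => hirr 0 h (coneOf_zero _)

lemma eq_of_smul_eq (hirr : ∀ v ∈ S, v ∉ coneOf (S.erase v)) {v w : V n} (hv : v ∈ S)
    (hw : w ∈ S) {a : ℝ} (ha : 0 ≤ a) (h : w = a • v) : w = v := by
  by_contra hne
  apply hirr w hw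
  have := coneOf_smul ha (mem_coneOf (Finset.mem_erase.2 ⟨fun e => hne e.symm, hv⟩))
  rwa [← h] at this

/-- An irredundant generator `v` of a strictly convex cone spans a ray: modulo `v` the remaining
generators satisfy no nontrivial nonnegative relation, so Gordan's theorem applies. -/
lemma rayGen_mem_raysOf (hS : IsStrictlyConvexCone (coneOf S))
    (hirr : ∀ v ∈ S, v ∉ coneOf (S.erase v)) {v : V n} (hv : v ∈ S) :
    rayGen v ∈ raysOf (coneOf S) := by
  have h0 := zero_notMem_of_irredundant hirr
  obtain ⟨m, hmv, hm⟩ := exists_pos_functional (S.erase v) v (by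
    intro c hc hsum
    obtain ⟨a, ha⟩ := Submodule.mem_span_singleton.1 hsum
    rcases lt_or_ge 0 a with hpos | hneg
    · exfalso
      apply hirr v hv
      have : v = a⁻¹ • ∑ w ∈ S.erase v, c w • w := (eq_inv_smul_iff₀ hpos.ne').2 ha
      have hmem := coneOf_smul (inv_nonneg.2 hpos.le)
        (coneOf_sum (S := S.erase v) c hc fun w hw => mem_coneOf hw)
      rwa [← this] at hmem
    · have hupd : ∀ w ∈ S.erase v, Function.update c v (-a) w = c w := fun w hw =>
        Function.update_of_ne (Finset.ne_of_mem_erase hw) _ _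
      have hz := eq_zero_of_sum_eq_zero hS (c := Function.update c v (-a)) (by
          intro w hw
          by_cases hwv : w = v
          · subst hwv; simpa using hneg
          · rw [Function.update_of_ne hwv]; exact hc w (Finset.mem_erase.2 ⟨hwv, hw⟩)) (by
          rw [← Finset.sum_erase_add _ _ hv, Function.update_self,
            Finset.sum_congr rfl fun w hw => by rw [hupd w hw], ← ha]
          simp)
      intro w hw
      rw [← hupd w hw]
      have hwS := Finset.mem_of_mem_erase hw
      exact hz w hwS fun e => h0 (e ▸ hwS))
  have hfil : S.filter (fun w => m w = 0) = {v} := by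
    ext w
    rw [Finset.mem_filter, Finset.mem_singleton]
    constructor
    · rintro ⟨hw, hw0⟩
      by_contra hne
      exact (hm w (Finset.mem_erase.2 ⟨hne, hw⟩)).ne' hw0
    · rintro rfl
      exact ⟨hv, hmv⟩
  have hnn : ∀ w ∈ S, 0 ≤ m w := by
    intro w hw
    by_cases hwv : w = v
    · rw [hwv, hmv]
    · exact (hm w (Finset.mem_erase.2 ⟨hwv, hw⟩)).le
  refine ⟨⟨m, nonneg_coneOf hnn, ?_⟩, ?_⟩
  · rw [face_eq_coneOf hnn, hfil, rayGen_eq_coneOf]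
  · rw [dimCone, rayGen_eq_coneOf, span_coneOf, Finset.coe_singleton,
      finrank_span_singleton fun e => h0 (e ▸ hv)]

lemma exists_eq_rayGen_s7 (hS : IsStrictlyConvexCone (coneOf S))
    (hirr : ∀ v ∈ S, v ∉ coneOf (S.erase v)) {ρ : Set (V n)} (hρ : ρ ∈ raysOf (coneOf S)) :
    ∃ v ∈ S, ρ = rayGen v := by
  obtain ⟨hface, hdim⟩ := hρ
  obtain ⟨T, hTS, rfl⟩ := hface.eq_coneOf
  have h0 := zero_notMem_of_irredundant hirr
  rw [dimCone, span_coneOf] at hdim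
  obtain ⟨v, hv⟩ : T.Nonempty := by
    rw [Finset.nonempty_iff_ne_empty]
    intro hT
    rw [hT, Finset.coe_empty, Submodule.span_empty, finrank_bot] at hdim
    exact zero_ne_one hdim
  have hvS := hTS hv
  have hspan : Submodule.span ℝ {v} = Submodule.span ℝ (T : Set (V n)) := by
    apply Submodule.eq_of_le_of_finrank_le
    · exact Submodule.span_mono (by simpa using hv)
    · rw [hdim, finrank_span_singleton fun e => h0 (e ▸ hvS)]
  refine ⟨v, hvS, ?_⟩
  have hT : T = {v} := by
    apply Finset.Subset.antisymm _ (by simpa using hv)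
    intro w hw
    rw [Finset.mem_singleton]
    have hwS := hTS hw
    have : w ∈ Submodule.span ℝ {v} := hspan ▸ Submodule.subset_span hw
    obtain ⟨a, ha⟩ := Submodule.mem_span_singleton.1 this
    rcases le_or_gt 0 a with h | h
    · exact eq_of_smul_eq hirr hvS hwS h ha.symm
    · exfalso
      have hmem : w ∈ coneOf S ∩ -coneOf S := by
        refine ⟨mem_coneOf hwS, ?_⟩
        rw [Set.mem_neg, ← ha, ← neg_smul]
        exact coneOf_smul (neg_nonneg.2 h.le) (mem_coneOf hvS)
      rw [hS] at hmem
      exact h0 (hmem ▸ hwS)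
  rw [hT, rayGen_eq_coneOf]

lemma primeCone_eq (hS : IsStrictlyConvexCone (coneOf S))
    (hirr : ∀ v ∈ S, v ∉ coneOf (S.erase v)) {v : V n} (hv : v ∈ S) :
    primeCone (coneOf S) (rayGen v) = coneOf (S.erase v) := by
  apply Set.Subset.antisymm
  · rintro _ ⟨t, ht, c, hc, rfl⟩
    refine coneOf_sum c (fun w _ => hc w) fun x hx => ?_
    obtain ⟨ρ', ⟨hρ', hne⟩, hx⟩ := Set.mem_iUnion₂.1 (ht hx)
    obtain ⟨w, hw, rfl⟩ := exists_eq_rayGen_s7 hS hirr hρ'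
    obtain ⟨a, ha, rfl⟩ := hx
    refine coneOf_smul ha (mem_coneOf (Finset.mem_erase.2 ⟨?_, hw⟩))
    rintro rfl
    exact hne rfl
  · rintro _ ⟨c, hc, rfl⟩
    refine ⟨S.erase v, fun w hw => ?_, c, hc, rfl⟩
    have hw := Finset.mem_erase.1 hw
    have hself : w ∈ rayGen w := ⟨1, zero_le_one, (one_smul _ _).symm⟩
    refine Set.mem_iUnion₂.2 ⟨rayGen w, ⟨rayGen_mem_raysOf hS hirr hw.2, fun e => ?_⟩, hself⟩
    have e : rayGen w = rayGen v := e
    rw [e] at hself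
    obtain ⟨a, ha, h⟩ := hself
    exact hw.1 (eq_of_smul_eq hirr hv hw.2 ha h)

end Irredundant

/-! ### Facets -/

lemma span_filter_le_ker {n : ℕ} (S : Finset (V n)) (m : V n →ₗ[ℝ] ℝ) :
    Submodule.span ℝ ((S.filter fun w => m w = 0 : Finset (V n)) : Set (V n)) ≤
      LinearMap.ker m := by
  rw [Submodule.span_le]
  intro w hw
  exact (Finset.mem_filter.1 hw).2

lemma finrank_ker_add_one {n : ℕ} {m : V n →ₗ[ℝ] ℝ} (hm : m ≠ 0) :
    Module.finrank ℝ (LinearMap.ker m) + 1 = n := by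
  have := Module.Dual.finrank_ker_add_one_of_ne_zero (K := ℝ) (f := m) hm
  simpa using this

/-- A functional nonnegative on a spanning set `S` and negative at `x` can be rotated about `x`
and its zeros in `S` until it picks up a new zero; after finitely many rotations the zeros span
a hyperplane. The bound `k` on the number of nonzero values drives the induction. -/
lemma exists_facet_aux {n : ℕ} {S : Finset (V n)} (hspan : Submodule.span ℝ (S : Set (V n)) = ⊤)
    {x : V n} (k : ℕ) : ∀ m : V n →ₗ[ℝ] ℝ, (∀ w ∈ S, 0 ≤ m w) → m x < 0 →
    (S.filter fun w => m w ≠ 0).card < k →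
    ∃ m' : V n →ₗ[ℝ] ℝ, (∀ w ∈ S, 0 ≤ m' w) ∧ m' x < 0 ∧ Module.finrank ℝ
      (Submodule.span ℝ ((S.filter fun w => m' w = 0 : Finset (V n)) : Set (V n))) = n - 1 := by
  induction k with
  | zero => intro m _ _ h; exact absurd h (Nat.not_lt_zero _)
  | succ k ih =>
    intro m hm hx hk
    have hm0 : m ≠ 0 := by rintro rfl; simp at hx
    have hker := finrank_ker_add_one hm0
    have hle := Submodule.finrank_mono (span_filter_le_ker S m)
    set F := Submodule.span ℝ ((S.filter fun w => m w = 0 : Finset (V n)) : Set (V n)) with hF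
    by_cases hdim : Module.finrank ℝ F = n - 1
    · exact ⟨m, hm, hx, hdim⟩
    have hlt : F ⊔ Submodule.span ℝ {x} < ⊤ := by
      apply Submodule.lt_top_of_finrank_lt_finrank
      have h1 := Submodule.finrank_add_le_finrank_add_finrank F (Submodule.span ℝ {x})
      have h2 : Module.finrank ℝ (Submodule.span ℝ {x}) = 1 :=
        finrank_span_singleton (by rintro rfl; simp at hx)
      rw [Module.finrank_fin_fun]
      omega
    -- `f` may be replaced by `-f`, so that it is negative somewhere on `S`.
    obtain ⟨f, hfker, w₁, hw₁, hfw₁⟩ : ∃ f : V n →ₗ[ℝ] ℝ,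
        F ⊔ Submodule.span ℝ {x} ≤ LinearMap.ker f ∧ ∃ w ∈ S, f w < 0 := by
      obtain ⟨f, hf0, hf⟩ := Submodule.exists_le_ker_of_lt_top _ hlt
      by_contra! hcon
      apply hf0
      have h1 := hcon f hf
      have h2 := hcon (-f) (by
        intro y hy
        have := hf hy
        rw [LinearMap.mem_ker] at this ⊢
        simp [this])
      apply LinearMap.ext_on hspan
      intro w hw
      have a := h1 w hw
      have b := h2 w hw
      rw [LinearMap.neg_apply] at b
      rw [LinearMap.zero_apply]
      linarith
    have hfx : f x = 0 :=
      hfker (Submodule.mem_sup_right (Submodule.mem_span_singleton_self x))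
    have hfF : ∀ w ∈ S, m w = 0 → f w = 0 := fun w hw h =>
      hfker (Submodule.mem_sup_left (Submodule.subset_span (Finset.mem_filter.2 ⟨hw, h⟩)))
    obtain ⟨w₀, hw₀, hmin⟩ := Finset.exists_min_image (S.filter fun w => f w < 0)
      (fun w => m w / (-f w)) ⟨w₁, Finset.mem_filter.2 ⟨hw₁, hfw₁⟩⟩
    obtain ⟨hw₀S, hfw₀⟩ := Finset.mem_filter.1 hw₀
    set t := m w₀ / (-f w₀) with ht
    have ht0 : 0 ≤ t := div_nonneg (hm w₀ hw₀S) (by linarith)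
    have hzero : m w₀ + t * f w₀ = 0 := by
      rw [ht, div_neg, neg_mul, div_mul_cancel₀ _ hfw₀.ne, add_neg_cancel]
    refine ih (m + t • f) (fun w hw => ?_) (by simpa [hfx] using hx) ?_
    · simp only [LinearMap.add_apply, LinearMap.smul_apply, smul_eq_mul]
      rcases lt_or_ge (f w) 0 with h | h
      · have := hmin w (Finset.mem_filter.2 ⟨hw, h⟩)
        rw [le_div_iff₀ (by linarith)] at this
        linarith
      · exact add_nonneg (hm w hw) (mul_nonneg ht0 h)
    · refine lt_of_lt_of_le (Finset.card_lt_card ?_) (Nat.lt_succ_iff.1 hk)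
      rw [Finset.ssubset_iff_of_subset]
      · refine ⟨w₀, Finset.mem_filter.2 ⟨hw₀S, fun h => ?_⟩, fun h => ?_⟩
        · rw [hfF w₀ hw₀S h] at hfw₀
          exact lt_irrefl _ hfw₀
        · exact (Finset.mem_filter.1 h).2 (by simpa using hzero)
      · intro w hw
        obtain ⟨hwS, h⟩ := Finset.mem_filter.1 hw
        refine Finset.mem_filter.2 ⟨hwS, fun h' => h ?_⟩
        simp [h', hfF w hwS h']

/-- A point outside a full-dimensional strictly convex polyhedral cone is strictly on the wrong
side of the supporting hyperplane of some facet. -/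
lemma exists_facet {n : ℕ} {S : Finset (V n)} (hS : IsStrictlyConvexCone (coneOf S))
    (h0 : (0 : V n) ∉ S) (hdim : dimCone (coneOf S) = n) {x : V n} (hx : x ∉ coneOf S) :
    ∃ m : V n →ₗ[ℝ] ℝ, (∀ y ∈ coneOf S, 0 ≤ m y) ∧ m x < 0 ∧
      IsFacetOf {y ∈ coneOf S | m y = 0} (coneOf S) := by
  obtain ⟨m₀, hm₀, hx₀⟩ := exists_separating hS h0 hx
  have hspan : Submodule.span ℝ (S : Set (V n)) = ⊤ := by
    apply Submodule.eq_top_of_finrank_eq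
    rw [← span_coneOf, Module.finrank_fin_fun]
    exact hdim
  obtain ⟨m, hm, hmx, hfr⟩ := exists_facet_aux hspan _ m₀ (fun w hw => (hm₀ w hw).le) hx₀
    (Nat.lt_succ_self _)
  refine ⟨m, nonneg_coneOf hm, hmx, ⟨m, nonneg_coneOf hm, rfl⟩, ?_⟩
  rw [hdim, dimCone, face_eq_coneOf hm, span_coneOf, hfr]

/-! ### Gluing along a common face -/

/-- For faces of two cones glued along `η`, the intersection is an intersection of two faces
of `η`, hence a face of both cones and of both given faces. -/
lemma isFaceOf_inter_of_glue {n : ℕ} {A B : Finset (V n)} {η τ₁ τ₂ : Set (V n)}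
    (hAB : coneOf A ∩ coneOf B = η) (hA : IsFaceOf η (coneOf A)) (hB : IsFaceOf η (coneOf B))
    (h₁ : IsFaceOf τ₁ (coneOf A)) (h₂ : IsFaceOf τ₂ (coneOf B)) :
    IsFaceOf (τ₁ ∩ τ₂) τ₁ ∧ IsFaceOf (τ₁ ∩ τ₂) τ₂ := by
  have heq : τ₁ ∩ τ₂ = (τ₁ ∩ η) ∩ (τ₂ ∩ η) := by
    ext x
    constructor
    · rintro ⟨a, b⟩
      have : x ∈ η := hAB ▸ ⟨h₁.subset a, h₂.subset b⟩
      exact ⟨⟨a, this⟩, b, this⟩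
    · rintro ⟨⟨a, -⟩, b, -⟩
      exact ⟨a, b⟩
  have hη : IsFaceOf (τ₁ ∩ τ₂) η := by
    rw [heq]
    exact ((h₁.inter hA).of_subset Set.inter_subset_right hA.subset).inter
      ((h₂.inter hB).of_subset Set.inter_subset_right hB.subset)
  exact ⟨(hη.trans hA).of_subset Set.inter_subset_left h₁.subset,
    (hη.trans hB).of_subset Set.inter_subset_right h₂.subset⟩

/-- Gluing two strictly convex polyhedral cones along a common face gives a fan. -/
lemma isFan_of_glue {n : ℕ} {A B : Finset (V n)} {η : Set (V n)}
    (hAc : IsStrictlyConvexCone (coneOf A)) (hBc : IsStrictlyConvexCone (coneOf B))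
    (hAB : coneOf A ∩ coneOf B = η) (hA : IsFaceOf η (coneOf A)) (hB : IsFaceOf η (coneOf B)) :
    IsFan ({τ | IsFaceOf τ (coneOf A)} ∪ {τ | IsFaceOf τ (coneOf B)}) := by
  have hcone : ∀ {C : Finset (V n)} {τ : Set (V n)}, IsStrictlyConvexCone (coneOf C) →
      IsFaceOf τ (coneOf C) → IsPolyhedralCone τ ∧ IsStrictlyConvexCone τ := by
    intro C τ hC hτ
    refine ⟨?_, hC.mono hτ.subset ?_⟩
    · obtain ⟨T, -, rfl⟩ := hτ.eq_coneOf
      exact ⟨T, rfl⟩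
    · obtain ⟨T, -, rfl⟩ := hτ.eq_coneOf
      exact coneOf_zero T
  have hsame : ∀ {C : Finset (V n)} {τ₁ τ₂ : Set (V n)}, IsFaceOf τ₁ (coneOf C) →
      IsFaceOf τ₂ (coneOf C) → IsFaceOf (τ₁ ∩ τ₂) τ₁ ∧ IsFaceOf (τ₁ ∩ τ₂) τ₂ := fun h₁ h₂ =>
    ⟨(h₁.inter h₂).of_subset Set.inter_subset_left h₁.subset,
      (h₁.inter h₂).of_subset Set.inter_subset_right h₂.subset⟩
  refine ⟨(finite_faces A).union (finite_faces B), ?_, ?_, ?_⟩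
  · rintro τ (h | h)
    exacts [hcone hAc h, hcone hBc h]
  · rintro τ (h | h) θ hθ
    exacts [Or.inl (hθ.trans h), Or.inr (hθ.trans h)]
  · rintro τ₁ (h₁ | h₁) τ₂ (h₂ | h₂)
    · exact hsame h₁ h₂
    · exact isFaceOf_inter_of_glue hAB hA hB h₁ h₂
    · rw [Set.inter_comm]
      exact (isFaceOf_inter_of_glue hAB hA hB h₂ h₁).symm
    · exact hsame h₁ h₂

/-! ### The pyramidal subdivision -/

theorem stmt_7 {n : ℕ} (σ ρ σ' η : Set (V n))
    (hpoly : IsPolyhedralCone σ) (hconv : IsStrictlyConvexCone σ)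
    (hdim : dimCone σ = n)
    (hρ : ρ ∈ raysOf σ)
    (hσ' : σ' = primeCone σ ρ) (hdim' : dimCone σ' = n)
    (hη : IsFacetOf η σ')
    (hbeyond : ∀ x ∈ ρ, x ≠ 0 → Beyond σ' η x)
    (hbeneath : ∀ η', IsFacetOf η' σ' → η' ≠ η → ∀ x ∈ ρ, x ≠ 0 → Beneath σ' η' x) :
    σ' ∩ (η + ρ) = η ∧
    σ' ∪ (η + ρ) = σ ∧
    IsFan ({τ | IsFaceOf τ σ'} ∪ {τ | IsFaceOf τ (η + ρ)}) := by
  classical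
  obtain ⟨S₀, rfl⟩ := hpoly
  obtain ⟨S, hS₀, hirr⟩ := exists_irredundant S₀
  rw [← hS₀] at hconv hdim hρ hσ' ⊢
  obtain ⟨v, hv, rfl⟩ := exists_eq_rayGen_s7 hconv hirr hρ
  rw [primeCone_eq hconv hirr hv] at hσ'
  subst hσ'
  set T := S.erase v with hT
  have h0S := zero_notMem_of_irredundant hirr
  have hv0 : v ≠ 0 := fun e => h0S (e ▸ hv)
  have h0T : (0 : V n) ∉ T := fun h => h0S (Finset.mem_of_mem_erase h)
  have hTS : coneOf T ⊆ coneOf S := coneOf_mono (Finset.erase_subset v S)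
  have hTconv : IsStrictlyConvexCone (coneOf T) := hconv.mono hTS (coneOf_zero T)
  have hvρ : v ∈ rayGen v := ⟨1, zero_le_one, (one_smul _ _).symm⟩
  obtain ⟨hηface, hηdim⟩ := hη
  obtain ⟨m, hm, hηm⟩ := id hηface
  have hmv : m v < 0 := hbeyond v hvρ hv0 m hm hηm
  have hηT : η ⊆ coneOf T := hηface.subset
  have hηzero : ∀ y ∈ η, m y = 0 := fun y hy => by rw [hηm] at hy; exact hy.2
  -- The facet `η` spans the kernel of `m`, for dimension reasons.
  have hspan : Submodule.span ℝ η = LinearMap.ker m := by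
    apply Submodule.eq_of_le_of_finrank_le
    · rw [Submodule.span_le]
      exact hηzero
    · have h1 := finrank_ker_add_one (m := m) (by rintro rfl; simp at hmv)
      rw [hdim', dimCone] at hηdim
      omega
  have hsub : η + rayGen v ⊆ coneOf S := by
    rintro _ ⟨y, hy, _, ⟨a, ha, rfl⟩, rfl⟩
    exact coneOf_add (hTS (hηT hy)) (coneOf_smul ha (mem_coneOf hv))
  have hηsub : η ⊆ η + rayGen v := fun y hy =>
    ⟨y, hy, 0, ⟨0, le_rfl, (zero_smul _ _).symm⟩, add_zero y⟩
  have hinter : coneOf T ∩ (η + rayGen v) = η := by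
    refine Set.Subset.antisymm ?_ fun y hy => ⟨hηT hy, hηsub hy⟩
    rintro _ ⟨hT', ⟨y, hy, _, ⟨a, ha, rfl⟩, rfl⟩⟩
    have h := hm _ hT'
    simp only [map_add, map_smul, smul_eq_mul, hηzero y hy, zero_add] at h
    have ha0 : a = 0 := le_antisymm (by nlinarith) ha
    simpa [ha0] using hy
  have hunion : coneOf T ∪ (η + rayGen v) = coneOf S := by
    apply Set.Subset.antisymm (Set.union_subset hTS hsub)
    intro x hx
    by_contra hnot
    have hxT : x ∉ coneOf T := fun h => hnot (Or.inl h)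
    obtain ⟨y, hy, c, hc, rfl⟩ := mem_coneOf_erase hv hx
    -- A facet inequality violated on the half-line `y + ℝ≥0 v` can only be that of `η`.
    have hfacet : ∀ b : ℝ, 0 ≤ b → y + b • v ∉ coneOf T →
        ∃ f : V n →ₗ[ℝ] ℝ, f (y + b • v) < 0 ∧ ∀ z ∈ η, f z = 0 := by
      intro b hb hbT
      obtain ⟨f, hf, hfx, hff⟩ := exists_facet hTconv h0T hdim' hbT
      refine ⟨f, hfx, ?_⟩
      by_cases hfη : {z ∈ coneOf T | f z = 0} = η
      · intro z hz
        rw [← hfη] at hz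
        exact hz.2
      · exfalso
        have h1 := hbeneath _ hff hfη v hvρ hv0 f hf rfl
        have h2 := hf y hy
        simp only [map_add, map_smul, smul_eq_mul] at hfx
        nlinarith
    have hker : ∀ f : V n →ₗ[ℝ] ℝ, (∀ z ∈ η, f z = 0) → ∀ z, m z = 0 → f z = 0 := by
      intro f hf z hz
      have h1 : Submodule.span ℝ η ≤ LinearMap.ker f := Submodule.span_le.2 hf
      exact h1 (hspan ▸ hz)
    -- The half-line from `y` in the direction of `v` meets `ker m` at parameter `t`.
    set t := m y / (-m v) with ht
    have ht0 : 0 ≤ t := div_nonneg (hm y hy) (by linarith)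
    have hmt : m (y + t • v) = 0 := by
      rw [map_add, map_smul, smul_eq_mul, ht, div_neg, neg_mul, div_mul_cancel₀ _ hmv.ne, add_neg_cancel]
    have htT : y + t • v ∈ coneOf T := by
      by_contra h
      obtain ⟨f, hf1, hf2⟩ := hfacet t ht0 h
      rw [hker f hf2 _ hmt] at hf1
      exact lt_irrefl _ hf1
    rcases le_or_gt t c with htc | htc
    · refine hnot (Or.inr ⟨y + t • v, ?_, (c - t) • v, ⟨c - t, by linarith, rfl⟩, ?_⟩)
      · rw [hηm]; exact ⟨htT, hmt⟩
      · simp only [sub_smul]; abel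
    · -- Before reaching `ker m` the half-line stays in `σ'` by convexity.
      apply hxT
      have htpos : 0 < t := hc.trans_lt htc
      have hconvcomb : y + c • v = (1 - c / t) • y + (c / t) • (y + t • v) := by
        rw [smul_add, smul_smul, div_mul_cancel₀ _ htpos.ne', sub_smul, one_smul]; abel
      rw [hconvcomb]
      have : c / t ≤ 1 := (div_le_one htpos).2 htc.le
      exact coneOf_add (coneOf_smul (by linarith) hy) (coneOf_smul (by positivity) htT)
  refine ⟨hinter, hunion, ?_⟩
  obtain ⟨U, hU, hηU⟩ := hηface.eq_coneOf
  have hsum : η + rayGen v = coneOf (insert v U) := by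
    apply Set.Subset.antisymm
    · rintro _ ⟨y, hy, _, ⟨a, ha, rfl⟩, rfl⟩
      rw [hηU] at hy
      exact coneOf_add (coneOf_mono (Finset.subset_insert v U) hy)
        (coneOf_smul ha (mem_coneOf (Finset.mem_insert_self v U)))
    · intro x hx
      obtain ⟨y, hy, a, ha, rfl⟩ := mem_coneOf_erase (Finset.mem_insert_self v U) hx
      refine ⟨y, ?_, a • v, ⟨a, ha, rfl⟩, rfl⟩
      rw [hηU]
      exact coneOf_mono (Finset.erase_insert_subset v U) hy
  -- The functional `-m` exposes `η` as a face of `η + ρ`.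
  have hface : IsFaceOf η (η + rayGen v) := by
    refine ⟨-m, ?_, ?_⟩
    · rintro _ ⟨y, hy, _, ⟨a, ha, rfl⟩, rfl⟩
      rw [LinearMap.neg_apply, map_add, hηzero y hy, zero_add, map_smul, smul_eq_mul]
      nlinarith
    · apply Set.Subset.antisymm
      · intro y hy
        exact ⟨hηsub hy, by simp [hηzero y hy]⟩
      · rintro _ ⟨⟨y, hy, _, ⟨a, ha, rfl⟩, rfl⟩, h⟩
        rw [LinearMap.neg_apply, neg_eq_zero, map_add, hηzero y hy, zero_add, map_smul,
          smul_eq_mul, mul_eq_zero, or_iff_left hmv.ne] at h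
        simpa [h] using hy
  rw [hsum] at hinter hface hsub ⊢
  exact isFan_of_glue hTconv (hconv.mono hsub (coneOf_zero _)) hinter hηface hface
end

section
/- Let Δ be a fan of rational strictly convex polyhedral cones in ℝⁿ, and for each ray κ ∈ Δ(1) let l_κ ∈ ℤⁿ denote its primitive generator. Let ρ ∈ Δ(1) and assume that for every cone σ ∈ Δ with ρ ∈ σ(1), the vector l_ρ does not lie in the linear span of {l_κ : κ ∈ σ(1), κ ≠ ρ}. Then there exist an integer c ≥ 1 and, for every cone σ ∈ Δ, a ℤ-linear functional m_σ : ℤⁿ → ℤ such that for every ray κ ∈ σ(1) one has m_σ(l_κ) = c if κ = ρ and m_σ(l_κ) = 0 if κ ≠ ρ. -/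
/-!
For a single cone `σ` having `ρ` as a ray, the hypothesis says that `l_ρ` is outside the real span of
the other ray generators, hence outside their rational span. Some functional over `ℚ`
therefore vanishes on the other generators but not on `l_ρ`; clearing denominators and fixing the sign gives an
integral functional with a positive value `c_σ` at `l_ρ` (`exists_int_functional`). If `ρ` is not a
ray of `σ`, the zero functional serves for every `c`, so `c_σ = 1` may be taken. As the fan is
finite, `c = ∏ c_σ` is a common multiple of the `c_σ`, and rescaling the functionals by `c / c_σ`
gives the result.
-/

open Pointwise

/-- The real vector associated to an integral vector. -/
def castZ {n : ℕ} (l : Fin n → ℤ) : V n := fun i => (l i : ℝ)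

/-- A rational polyhedral cone: generated by finitely many integral vectors. -/
def IsRationalPolyhedralCone {n : ℕ} (σ : Set (V n)) : Prop :=
  ∃ s : Finset (Fin n → ℤ), σ = coneOf (s.image castZ)

/-- A primitive integral vector: the gcd of its coordinates is 1. -/
def IsPrimitive {n : ℕ} (l : Fin n → ℤ) : Prop :=
  Finset.univ.gcd l = 1

/-- An integral vector outside the real span of a set of integral vectors is separated from that
set by an integral functional. -/
theorem exists_int_functional {n : ℕ} (S : Set (Fin n → ℤ)) (l : Fin n → ℤ)
    (h : castZ l ∉ Submodule.span ℝ (castZ '' S)) :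
    ∃ m : (Fin n → ℤ) →ₗ[ℤ] ℤ, 1 ≤ m l ∧ ∀ s ∈ S, m s = 0 := by
  let q : (Fin n → ℤ) → (Fin n → ℚ) := fun v i => (v i : ℚ)
  let ψ : (Fin n → ℚ) →ₗ[ℚ] (Fin n → ℝ) :=
    LinearMap.pi fun i => (Algebra.linearMap ℚ ℝ).comp (LinearMap.proj i)
  have hψ : ∀ v, ψ (q v) = castZ v := fun v => by
    ext i
    simp [ψ, q, castZ]
  -- The rational points of the real span form a rational subspace containing `S` but not `l`.
  let W : Submodule ℚ (Fin n → ℚ) :=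
    ((Submodule.span ℝ (castZ '' S)).restrictScalars ℚ).comap ψ
  have hl : q l ∉ W := fun hw => h (by
    have hw' : ψ (q l) ∈ Submodule.span ℝ (castZ '' S) := hw
    rwa [hψ] at hw')
  have hS : ∀ s ∈ S, q s ∈ W := fun s hs => by
    change ψ (q s) ∈ Submodule.span ℝ (castZ '' S)
    rw [hψ]
    exact Submodule.subset_span ⟨s, hs, rfl⟩
  obtain ⟨f, hfl, hfW⟩ := Submodule.exists_le_ker_of_notMem hl
  obtain ⟨d, hd⟩ := IsLocalization.exist_integer_multiples_of_finite (nonZeroDivisors ℤ)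
    (fun i : Fin n => f (Pi.single i 1))
  choose z hz using hd
  let m : (Fin n → ℤ) →ₗ[ℤ] ℤ := ∑ i, z i • LinearMap.proj i
  have hm : ∀ v, ((m v : ℤ) : ℚ) = ((d : ℤ) : ℚ) * f (q v) := fun v => by
    have hfv : f (q v) = ∑ i, (v i : ℚ) * f (Pi.single i 1) := by
      rw [LinearMap.pi_apply_eq_sum_univ f (q v)]
      refine Finset.sum_congr rfl fun i _ => ?_
      have hi : (fun j => if i = j then (1 : ℚ) else 0) = Pi.single i 1 := by
        ext j
        simp [Pi.single_apply, eq_comm]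
      simp [hi, q]
    have hz' : ∀ i, (z i : ℚ) = ((d : ℤ) : ℚ) * f (Pi.single i 1) := fun i => by
      simpa using hz i
    rw [hfv, Finset.mul_sum]
    simp only [m, LinearMap.sum_apply, LinearMap.smul_apply, LinearMap.proj_apply, smul_eq_mul,
      Int.cast_sum, Int.cast_mul, hz']
    exact Finset.sum_congr rfl fun i _ => by ring
  have hd0 : ((d : ℤ) : ℚ) ≠ 0 := by
    exact_mod_cast nonZeroDivisors.ne_zero d.2
  have hml : m l ≠ 0 := fun h0 => by
    have h1 := hm l
    rw [h0, Int.cast_zero] at h1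
    exact mul_ne_zero hd0 hfl h1.symm
  have hmS : ∀ s ∈ S, m s = 0 := fun s hs => by
    have h1 := hm s
    rw [show f (q s) = 0 from hfW (hS s hs), mul_zero] at h1
    exact_mod_cast h1
  rcases lt_or_gt_of_ne hml with hneg | hpos
  · refine ⟨-m, ?_, fun s hs => by simp [hmS s hs]⟩
    rw [LinearMap.neg_apply]
    omega
  · exact ⟨m, hpos, hmS⟩

/-!
STATEMENT 9: Let `Δ` be a fan of rational strictly convex polyhedral cones in
`ℝⁿ`, with `l_κ` the primitive generator of each ray `κ ∈ Δ(1)`.  If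
`ρ ∈ Δ(1)` is such that for every `σ ∈ Δ` with `ρ ∈ σ(1)` the vector `l_ρ` is
not in the linear span of the primitive generators of the other rays of `σ`,
then there are an integer `c ≥ 1` and, for every `σ ∈ Δ`, a `ℤ`-linear
functional `m_σ` with `m_σ(l_κ) = c` for `κ = ρ` and `m_σ(l_κ) = 0` for every
other ray `κ` of `σ`.
-/

theorem stmt_9 {n : ℕ} (Δ : Set (Set (V n)))
    (hΔ : IsFan Δ)
    (hrat : ∀ σ ∈ Δ, IsRationalPolyhedralCone σ)
    (L : Set (V n) → (Fin n → ℤ))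
    (hL : ∀ κ ∈ Δ, dimCone κ = 1 → IsPrimitive (L κ) ∧ κ = rayGen (castZ (L κ)))
    (ρ : Set (V n)) (hρ : ρ ∈ Δ) (hρdim : dimCone ρ = 1)
    (hindep : ∀ σ ∈ Δ, ρ ∈ raysOf σ →
      castZ (L ρ) ∉ Submodule.span ℝ {v | ∃ κ ∈ raysOf σ, κ ≠ ρ ∧ v = castZ (L κ)}) :
    ∃ c : ℤ, 1 ≤ c ∧ ∀ σ ∈ Δ, ∃ m : (Fin n → ℤ) →ₗ[ℤ] ℤ,
      ∀ κ ∈ raysOf σ, (κ = ρ → m (L κ) = c) ∧ (κ ≠ ρ → m (L κ) = 0) := by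
  have key : ∀ σ ∈ Δ, ∃ c : ℤ, 1 ≤ c ∧ ∃ m : (Fin n → ℤ) →ₗ[ℤ] ℤ,
      ∀ κ ∈ raysOf σ, (κ = ρ → m (L κ) = c) ∧ (κ ≠ ρ → m (L κ) = 0) := by
    intro σ hσ
    by_cases hr : ρ ∈ raysOf σ
    · obtain ⟨m, hm1, hm0⟩ := exists_int_functional (L '' {κ | κ ∈ raysOf σ ∧ κ ≠ ρ}) (L ρ) (by
        convert hindep σ hσ hr using 3
        ext v
        simp only [Set.mem_image, Set.mem_ofPred_eq, exists_exists_and_eq_and]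
        grind)
      exact ⟨m (L ρ), hm1, m, fun κ hκ =>
        ⟨fun h => by rw [h], fun h => hm0 _ ⟨κ, ⟨hκ, h⟩, rfl⟩⟩⟩
    · exact ⟨1, le_rfl, 0, fun κ hκ => ⟨fun h => absurd (h ▸ hκ) hr, fun _ => rfl⟩⟩
  choose! c hc m hm using key
  refine ⟨∏ σ ∈ hΔ.1.toFinset, c σ, ?_, fun σ hσ => ?_⟩
  · have hpos : 0 < ∏ σ ∈ hΔ.1.toFinset, c σ :=
      Finset.prod_pos fun σ hσ => hc σ (hΔ.1.mem_toFinset.1 hσ)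
    omega
  · obtain ⟨k, hk⟩ := Finset.dvd_prod_of_mem c (hΔ.1.mem_toFinset.2 hσ)
    refine ⟨k • m σ, fun κ hκ => ⟨fun h => ?_, fun h => ?_⟩⟩
    · rw [hk, LinearMap.smul_apply, (hm σ hσ κ hκ).1 h, smul_eq_mul, mul_comm]
    · rw [LinearMap.smul_apply, (hm σ hσ κ hκ).2 h, smul_zero]
end
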